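/- arXiv:2601.21585 — 6 statements merged into one kernel-verified Lean document; each statement's English description precedes it below -/
import Mathlib

section
/- Let H be a real Banach space with a direct sum decomposition H = H₁ ⊕ H₂ into closed complementary subspaces, where H₁ is finite dimensional. Let ψ : H → ℝ be a C¹ functional with ψ(0) = 0 which satisfies the Palais–Smale condition. Suppose there exists δ > 0 such that: (P1) ψ(u) ≤ 0 for every u ∈ H₁ with ‖u‖ ≤ δ; (P2) ψ(u) ≥ 0 for every u ∈ H₂ with ‖u‖ ≤ δ; (P3) ψ is bounded below and inf_H ψ < 0. Then ψ has at least two critical points different from 0, i.e. there exist u, v ∈ H with u ≠ 0, v ≠ 0, u ≠ v, and ψ'(u) = 0, ψ'(v) = 0. -/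
section BNHelpers

section
open Set Filter Topology MeasureTheory

noncomputable def retB {E : Type*} [NormedAddCommGroup E] [NormedSpace ℝ E] (R : ℝ) (x : E) : E :=
  (R / max R ‖x‖) • x

section ret
variable {E : Type*} [NormedAddCommGroup E] [NormedSpace ℝ E] {R : ℝ}

lemma retB_of_le (hR : 0 < R) {x : E} (hx : ‖x‖ ≤ R) : retB R x = x := by
  rw [retB, max_eq_left hx, div_self hR.ne', one_smul]

lemma norm_retB_of_ge (hR : 0 < R) {x : E} (hx : R ≤ ‖x‖) : ‖retB R x‖ = R := by
  have : 0 < ‖x‖ := hR.trans_le hx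
  rw [retB, max_eq_right hx, norm_smul, Real.norm_of_nonneg (by positivity)]
  field_simp

lemma norm_retB_le (hR : 0 < R) (x : E) : ‖retB R x‖ ≤ R := by
  rcases le_total ‖x‖ R with h | h
  · rwa [retB_of_le hR h]
  · rw [norm_retB_of_ge hR h]

lemma continuous_retB (hR : 0 < R) : Continuous (retB R : E → E) := by
  unfold retB
  refine Continuous.smul (Continuous.div continuous_const (by fun_prop) ?_) continuous_id
  intro x
  exact (hR.trans_le (le_max_left _ _)).ne'

lemma retB_lip (hR : 0 < R) (x y : E) : ‖retB R x - retB R y‖ ≤ 2 * ‖x - y‖ := by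
  set m := max R ‖x‖ with hm
  set n := max R ‖y‖ with hn
  have hm0 : 0 < m := hR.trans_le (le_max_left _ _)
  have hn0 : 0 < n := hR.trans_le (le_max_left _ _)
  have hmR : R ≤ m := le_max_left _ _
  have hny : ‖y‖ ≤ n := le_max_right _ _
  have hmn : |n - m| ≤ ‖x - y‖ := by
    have := abs_max_sub_max_le_max R ‖y‖ R ‖x‖
    rw [sub_self, abs_zero, max_eq_right (abs_nonneg (‖y‖ - ‖x‖))] at this
    refine this.trans ?_
    rw [abs_sub_comm]
    exact abs_norm_sub_norm_le x y
  have e : retB R x - retB R y = (R / m) • (x - y) + (R / m - R / n) • y := by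
    simp only [retB, ← hm, ← hn]
    rw [smul_sub, sub_smul]; abel
  rw [e]
  refine (norm_add_le _ _).trans ?_
  rw [norm_smul, norm_smul, Real.norm_of_nonneg (by positivity : 0 ≤ R / m)]
  have h1 : R / m ≤ 1 := (div_le_one hm0).2 hmR
  have h2 : ‖R / m - R / n‖ * ‖y‖ ≤ |n - m| := by
    have : R / m - R / n = (R / m) * ((n - m) / n) := by field_simp
    rw [this, norm_mul, Real.norm_of_nonneg (by positivity : 0 ≤ R / m), Real.norm_eq_abs, abs_div,
      abs_of_pos hn0]
    calc R / m * (|n - m| / n) * ‖y‖ ≤ 1 * (|n - m| / n) * n := by gcongr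
      _ = |n - m| := by field_simp
  nlinarith [norm_nonneg (x - y)]
end ret

lemma det_poly_aux {E : Type*} [NormedAddCommGroup E] [NormedSpace ℝ E] [FiniteDimensional ℝ E]
    (τ : ℝ) (hτ : 0 < τ) : ∃ (n : ℕ) (v c : ℕ → ℝ), (∀ i, 0 < v i ∧ v i < τ) ∧
      ∑ i ∈ Finset.range n, c i = 1 ∧
      ∀ A : E →L[ℝ] E, (ContinuousLinearMap.id ℝ E + A).det =
        ∑ i ∈ Finset.range n, c i * (ContinuousLinearMap.id ℝ E + v i • A).det := by
  classical
  let d := Module.finrank ℝ E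
  let v : ℕ → ℝ := fun i => τ / (i + 2)
  have hinj : Function.Injective v := by
    intro i j hij
    have : τ / ((i:ℝ) + 2) = τ / ((j:ℝ) + 2) := hij
    rw [div_eq_div_iff (by positivity) (by positivity)] at this
    have := mul_left_cancel₀ hτ.ne' this
    have : (j : ℝ) = i := by linarith
    exact_mod_cast this.symm
  let s := Finset.range (d + 1)
  refine ⟨d + 1, v, fun i => (Lagrange.basis s v i).eval 1, ?_, ?_, ?_⟩
  · intro i
    have h2 : (0:ℝ) ≤ i := Nat.cast_nonneg i
    refine ⟨by positivity, ?_⟩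
    rw [div_lt_iff₀ (by positivity)]
    nlinarith
  · rw [← Polynomial.eval_finsetSum, Lagrange.sum_basis hinj.injOn (by simp)]
    simp
  · intro A
    let b := Module.finBasis ℝ E
    let M := LinearMap.toMatrix b b (A : E →ₗ[ℝ] E)
    let q : Polynomial ℝ := Matrix.det ((Polynomial.X : Polynomial ℝ) • M.map Polynomial.C
      + (1 : Matrix (Fin d) (Fin d) ℝ).map Polynomial.C)
    have hq : ∀ t : ℝ, q.eval t = (ContinuousLinearMap.id ℝ E + t • A).det := by
      intro t
      have h1 : (ContinuousLinearMap.id ℝ E + t • A).det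
          = LinearMap.det ((LinearMap.id : E →ₗ[ℝ] E) + t • (A : E →ₗ[ℝ] E)) := rfl
      rw [h1, ← LinearMap.det_toMatrix b]
      have h2 : LinearMap.toMatrix b b ((LinearMap.id : E →ₗ[ℝ] E) + t • (A : E →ₗ[ℝ] E))
          = 1 + t • M := by
        rw [map_add, LinearMap.toMatrix_id, map_smul]
      rw [h2]
      show Polynomial.eval t (Matrix.det _) = _
      rw [← Polynomial.coe_evalRingHom, RingHom.map_det]
      congr 1
      ext i j
      by_cases hij : i = j <;> simp [hij] <;> ring
    have hdeg : q.degree < s.card := by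
      have := Polynomial.natDegree_det_X_add_C_le M (1 : Matrix (Fin d) (Fin d) ℝ)
      rw [Fintype.card_fin] at this
      refine lt_of_le_of_lt Polynomial.degree_le_natDegree ?_
      simp only [s, Finset.card_range]
      exact_mod_cast Nat.lt_succ_of_le this
    have h := Lagrange.eq_interpolate_of_eval_eq (s := s) (v := v) (fun i => q.eval (v i))
      hinj.injOn hdeg (fun i _ => rfl)
    have h3 := hq 1
    rw [one_smul] at h3
    rw [← h3, h, Lagrange.interpolate_apply, Polynomial.eval_finsetSum]
    refine Finset.sum_congr rfl fun i _ => ?_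
    rw [Polynomial.eval_mul, Polynomial.eval_C, hq, mul_comm]

end

section
open Set Filter Topology MeasureTheory

lemma no_C1_retraction {E : Type*} [NormedAddCommGroup E] [InnerProductSpace ℝ E]
    [FiniteDimensional ℝ E] [MeasurableSpace E] [BorelSpace E]
    {R : ℝ} (hR : 0 < R) (F : E → E) (hF : ContDiff ℝ 1 F) (hFR : ∀ x, ‖F x‖ = R)
    (hFx : ∀ x, ‖x‖ = R → F x = x) : False := by
  let μ : Measure E := volume
  let g : E → E := fun x => F x - x
  have hg : ContDiff ℝ 1 g := hF.sub contDiff_id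
  have hgd : Differentiable ℝ g := hg.differentiable (by norm_num)
  have hFd : Differentiable ℝ F := hF.differentiable (by norm_num)
  have hg'c : Continuous (fderiv ℝ g) := hg.continuous_fderiv (by norm_num)
  obtain ⟨C, hC⟩ := (isCompact_closedBall (0:E) R).exists_bound_of_continuousOn hg'c.continuousOn
  have hC0 : 0 ≤ C := (norm_nonneg _).trans (hC 0 (by simp [hR.le]))
  have hglip : ∀ x ∈ Metric.closedBall (0:E) R, ∀ y ∈ Metric.closedBall (0:E) R,
      ‖g x - g y‖ ≤ C * ‖x - y‖ := fun x hx y hy =>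
    (convex_closedBall (0:E) R).norm_image_sub_le_of_norm_fderiv_le
      (fun z _ => hgd z) hC hy hx
  let G : E → E := fun x => g (retB R x)
  have hmem : ∀ x : E, retB R x ∈ Metric.closedBall (0:E) R := fun x => by
    simpa using norm_retB_le hR x
  have hGlip : ∀ x y, ‖G x - G y‖ ≤ 2 * C * ‖x - y‖ := by
    intro x y
    have h1 := hglip _ (hmem x) _ (hmem y)
    have h2 := retB_lip hR x y
    calc _ ≤ C * ‖retB R x - retB R y‖ := h1
      _ ≤ C * (2 * ‖x - y‖) := by gcongr
      _ = _ := by ring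
  have hGout : ∀ x, R ≤ ‖x‖ → G x = 0 := by
    intro x hx
    show F _ - _ = 0
    rw [hFx _ (norm_retB_of_ge hR hx), sub_self]
  have hGin : ∀ x ∈ Metric.ball (0:E) R, G x = g x := by
    intro x hx
    show g _ = _
    rw [retB_of_le hR (by simpa using (mem_ball_zero_iff.1 hx).le)]
  -- determinant positive near identity
  have hdet : ∃ η > 0, ∀ A : E →L[ℝ] E, ‖A‖ < η → 0 < (ContinuousLinearMap.id ℝ E + A).det := by
    have hc : Continuous fun A : E →L[ℝ] E => (ContinuousLinearMap.id ℝ E + A).det :=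
      ContinuousLinearMap.continuous_det.comp (continuous_const.add continuous_id)
    have h0 : ∀ᶠ A in 𝓝 (0 : E →L[ℝ] E), 0 < (ContinuousLinearMap.id ℝ E + A).det := by
      apply hc.continuousAt.eventually_const_lt
      simp [ContinuousLinearMap.det]
    obtain ⟨η, hη, h⟩ := Metric.eventually_nhds_iff.1 h0
    exact ⟨η, hη, fun A hA => h (by simpa using hA)⟩
  obtain ⟨η, hη, hdet⟩ := hdet
  let τ := min η 1 / (2 * C + 1)
  have hτ : 0 < τ := by positivity
  have key : ∀ t, 0 < t → t < τ →
      IntegrableOn (fun x => (ContinuousLinearMap.id ℝ E + t • fderiv ℝ g x).det)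
        (Metric.ball (0:E) R) μ ∧
      ∫ x in Metric.ball (0:E) R, (ContinuousLinearMap.id ℝ E + t • fderiv ℝ g x).det ∂μ
        = (μ (Metric.ball (0:E) R)).toReal := by
    intro t ht0 ht
    have htC : t * (2 * C + 1) < min η 1 := by rwa [lt_div_iff₀ (by positivity)] at ht
    have ht1 : t * (2 * C) < 1 := by nlinarith [min_le_right η 1]
    have htη : t * C < η := by nlinarith [min_le_left η 1, mul_nonneg ht0.le hC0]
    let f : E → E := fun x => x + t • G x
    have happ : ApproximatesLinearOn f ((ContinuousLinearEquiv.refl ℝ E : E ≃L[ℝ] E) : E →L[ℝ] E)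
        univ (Real.toNNReal (t * (2 * C))) := by
      intro x _ y _
      have : f x - f y - (x - y) = t • (G x - G y) := by
        simp only [f, smul_sub]; abel
      simp only [ContinuousLinearEquiv.coe_refl, ContinuousLinearMap.coe_id', id]
      rw [this, norm_smul, Real.norm_of_nonneg ht0.le, Real.coe_toNNReal _ (by positivity)]
      calc t * ‖G x - G y‖ ≤ t * (2 * C * ‖x - y‖) := by gcongr; exact hGlip x y
        _ = _ := by ring
    have hsmall : Subsingleton E ∨ Real.toNNReal (t * (2 * C)) <
        ‖((ContinuousLinearEquiv.refl ℝ E : E ≃L[ℝ] E).symm : E →L[ℝ] E)‖₊⁻¹ := by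
      rcases subsingleton_or_nontrivial E with h | h
      · exact Or.inl h
      · right
        have : ‖((ContinuousLinearEquiv.refl ℝ E : E ≃L[ℝ] E).symm : E →L[ℝ] E)‖₊ = 1 := by
          ext
          simp
        rw [this, inv_one]
        exact Real.toNNReal_lt_one.2 ht1
    have hinj : Function.Injective f := injOn_univ.1 (happ.injOn hsmall)
    have hsurj : Function.Surjective f := happ.surjective hsmall
    have hfout : ∀ x, x ∉ Metric.ball (0:E) R → f x = x := by
      intro x hx
      have : R ≤ ‖x‖ := by simpa using hx
      simp [f, hGout x this]
    have himg : f '' Metric.ball (0:E) R = Metric.ball (0:E) R := by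
      apply Subset.antisymm
      · rintro _ ⟨x, hx, rfl⟩
        by_contra hne
        have := hinj (hfout _ hne)
        rw [this] at hne
        exact hne hx
      · intro y hy
        obtain ⟨x, rfl⟩ := hsurj y
        by_cases hx : x ∈ Metric.ball (0:E) R
        · exact ⟨x, hx, rfl⟩
        · rw [hfout x hx] at hy
          exact absurd hy hx
    have hderiv : ∀ x ∈ Metric.ball (0:E) R, HasFDerivWithinAt f
        (ContinuousLinearMap.id ℝ E + t • fderiv ℝ g x) (Metric.ball (0:E) R) x := by
      intro x hx
      have h1 : HasFDerivAt (fun x => x + t • g x)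
          (ContinuousLinearMap.id ℝ E + t • fderiv ℝ g x) x :=
        (hasFDerivAt_id x).add ((hgd x).hasFDerivAt.const_smul t)
      refine h1.hasFDerivWithinAt.congr (fun y hy => ?_) ?_
      · simp [f, hGin y hy]
      · simp [f, hGin x hx]
    have hlin := lintegral_abs_det_fderiv_eq_addHaar_image μ
      (Metric.isOpen_ball (x := (0:E)) (ε := R)).measurableSet hderiv hinj.injOn
    rw [himg] at hlin
    have hpos : ∀ x ∈ Metric.ball (0:E) R,
        0 < (ContinuousLinearMap.id ℝ E + t • fderiv ℝ g x).det := by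
      intro x hx
      apply hdet
      rw [norm_smul, Real.norm_of_nonneg ht0.le]
      refine lt_of_le_of_lt ?_ htη
      gcongr
      exact hC x (Metric.ball_subset_closedBall hx)
    have hcont : Continuous fun x => (ContinuousLinearMap.id ℝ E + t • fderiv ℝ g x).det :=
      ContinuousLinearMap.continuous_det.comp (continuous_const.add (hg'c.const_smul t))
    constructor
    · exact (hcont.continuousOn.integrableOn_compact (isCompact_closedBall (0:E) R)).mono_set
        Metric.ball_subset_closedBall
    · rw [integral_eq_lintegral_of_nonneg_ae]
      · congr 1
        rw [← hlin]
        refine setLIntegral_congr_fun Metric.isOpen_ball.measurableSet fun x hx => ?_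
        rw [abs_of_pos (hpos x hx)]
      · exact (ae_restrict_iff' Metric.isOpen_ball.measurableSet).2
          (Eventually.of_forall fun x hx => (hpos x hx).le)
      · exact hcont.aestronglyMeasurable
  obtain ⟨n, v, c, hv, hc, hdetp⟩ := det_poly_aux (E := E) τ hτ
  have hzero : ∀ x, (ContinuousLinearMap.id ℝ E + fderiv ℝ g x).det = 0 := by
    intro x
    have h1 : ContinuousLinearMap.id ℝ E + fderiv ℝ g x = fderiv ℝ F x := by
      have : HasFDerivAt g (fderiv ℝ F x - ContinuousLinearMap.id ℝ E) x :=
        (hFd x).hasFDerivAt.sub (hasFDerivAt_id x)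
      rw [this.fderiv]; abel
    rw [h1]
    have h2 : ∀ w, inner ℝ (F x) (fderiv ℝ F x w) = 0 := by
      intro w
      have hd := ((hFd x).hasFDerivAt.inner ℝ (hFd x).hasFDerivAt)
      have hcst : (fun y => inner ℝ (F y) (F y)) = fun _ => R ^ 2 := by
        funext y
        rw [real_inner_self_eq_norm_sq, hFR]
      rw [hcst] at hd
      have := congrArg (fun L : E →L[ℝ] ℝ => L w) (hd.unique (hasFDerivAt_const (R^2) x))
      simp [fderivInnerCLM_apply, real_inner_comm] at this
      linarith [real_inner_comm (F x) (fderiv ℝ F x w)]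
    by_contra hne
    have hu : IsUnit (LinearMap.det (fderiv ℝ F x : E →ₗ[ℝ] E)) := isUnit_iff_ne_zero.2 hne
    obtain ⟨w, hw⟩ := ((Module.End.isUnit_iff _).1 ((LinearMap.isUnit_iff_isUnit_det _).2 hu)).2 (F x)
    have h3 := h2 w
    have hw' : fderiv ℝ F x w = F x := hw
    rw [hw', real_inner_self_eq_norm_sq, hFR] at h3
    exact (pow_pos hR 2).ne' h3
  have hfin : (0:ℝ) = (μ (Metric.ball (0:E) R)).toReal := by
    calc (0:ℝ) = ∫ x in Metric.ball (0:E) R, (ContinuousLinearMap.id ℝ E + fderiv ℝ g x).det ∂μ := by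
          simp [hzero]
      _ = ∫ x in Metric.ball (0:E) R, ∑ i ∈ Finset.range n,
            c i * (ContinuousLinearMap.id ℝ E + v i • fderiv ℝ g x).det ∂μ := by
          exact integral_congr_ae (Eventually.of_forall fun x => hdetp _)
      _ = ∑ i ∈ Finset.range n, c i * (μ (Metric.ball (0:E) R)).toReal := by
          rw [integral_finsetSum _ fun i _ => ((key _ (hv i).1 (hv i).2).1.const_mul _)]
          refine Finset.sum_congr rfl fun i _ => ?_
          rw [integral_const_mul, (key _ (hv i).1 (hv i).2).2]
      _ = _ := by rw [← Finset.sum_mul, hc, one_mul]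
  have hp : 0 < μ (Metric.ball (0:E) R) := Metric.measure_ball_pos μ 0 hR
  have hl : μ (Metric.ball (0:E) R) < ⊤ := measure_ball_lt_top
  exact (ENNReal.toReal_pos hp.ne' hl.ne).ne hfin

end

section
open Set Filter Topology MeasureTheory

/-- a continuous perturbation of the identity supported in a ball has a zero. -/
lemma exists_zero_of_id_outside {E : Type*} [NormedAddCommGroup E] [InnerProductSpace ℝ E]
    [FiniteDimensional ℝ E] {R : ℝ} (hR : 0 < R) (k : E → E) (hk : Continuous k)
    (hk0 : ∀ x, R ≤ ‖x‖ → k x = 0) : ∃ x, x + k x = 0 := by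
  borelize E
  by_contra! hne
  have hcomp : IsCompact (Metric.closedBall (0:E) R) := isCompact_closedBall _ _
  obtain ⟨x0, hx0, hmin⟩ := hcomp.exists_isMinOn ⟨0, by simp [hR.le]⟩
    (f := fun x => ‖x + k x‖) (by fun_prop)
  set ε := ‖x0 + k x0‖ with hε
  have hε0 : 0 < ε := norm_pos_iff.2 (hne x0)
  obtain ⟨g, hg, hgk, hgs⟩ := hk.exists_contDiff_approx 1 (ε := fun _ => ε) continuous_const
    (fun _ => hε0)
  have hg0 : ∀ x, R ≤ ‖x‖ → g x = 0 := by
    intro x hx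
    by_contra h
    exact hgs h (hk0 x hx)
  have hnz : ∀ x, x + g x ≠ 0 := by
    intro x hx
    rcases le_or_gt R ‖x‖ with h | h
    · rw [hg0 x h, add_zero] at hx
      rw [hx, norm_zero] at h
      linarith
    · have h1 : ε ≤ ‖x + k x‖ := hmin (by simpa using h.le)
      have h2 := hgk x
      rw [dist_eq_norm] at h2
      have : x + k x = -(g x - k x) := by
        rw [eq_comm, neg_sub, ← sub_eq_zero]
        have : k x - g x - (x + k x) = -(x + g x) := by abel
        rw [this, hx, neg_zero]
      rw [this, norm_neg] at h1
      linarith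
  have hh : ContDiff ℝ 1 fun x => x + g x := contDiff_id.add hg
  refine no_C1_retraction hR (fun x => (R * ‖x + g x‖⁻¹) • (x + g x)) ?_ ?_ ?_
  · refine ContDiff.smul (contDiff_const.mul ?_) hh
    exact (hh.norm ℝ hnz).inv fun x => norm_ne_zero_iff.2 (hnz x)
  · intro x
    have := norm_pos_iff.2 (hnz x)
    rw [norm_smul, Real.norm_of_nonneg (by positivity)]
    field_simp
  · intro x hx
    simp [hg0 x hx.ge, hx, hR.ne']

lemma brouwer_inner {E : Type*} [NormedAddCommGroup E] [InnerProductSpace ℝ E]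
    [FiniteDimensional ℝ E] (f : E → E) (hf : Continuous f) (M : ℝ) (hM : ∀ x, ‖f x‖ ≤ M) :
    ∃ x, f x = x := by
  have hM0 : 0 ≤ M := (norm_nonneg _).trans (hM 0)
  obtain ⟨x, hx⟩ := exists_zero_of_id_outside (R := M + 1) (by linarith)
    (fun x => -((max 0 (min 1 (M + 1 - ‖x‖))) • f x)) (by fun_prop) (by
      intro x hx
      have : min 1 (M + 1 - ‖x‖) ≤ 0 := (min_le_right _ _).trans (by linarith)
      simp [max_eq_left this])
  have hx' : x = (max 0 (min 1 (M + 1 - ‖x‖))) • f x := by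
    rwa [← sub_eq_add_neg, sub_eq_zero] at hx
  have h1 : max 0 (min 1 (M + 1 - ‖x‖)) ≤ 1 := max_le zero_le_one (min_le_left _ _)
  have h0 : 0 ≤ max 0 (min 1 (M + 1 - ‖x‖)) := le_max_left _ _
  have hn : ‖x‖ ≤ M := by
    rw [hx', norm_smul, Real.norm_of_nonneg h0]
    have := hM x
    nlinarith [norm_nonneg (f x)]
  rw [min_eq_left (by linarith), max_eq_right zero_le_one, one_smul] at hx'
  exact ⟨x, hx'.symm⟩

lemma brouwer_bounded {E : Type*} [NormedAddCommGroup E] [NormedSpace ℝ E]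
    [FiniteDimensional ℝ E] (f : E → E) (hf : Continuous f) (M : ℝ) (hM : ∀ x, ‖f x‖ ≤ M) :
    ∃ x, f x = x := by
  let e := toEuclidean (E := E)
  let eL : E →L[ℝ] EuclideanSpace ℝ (Fin (Module.finrank ℝ E)) := e
  obtain ⟨x, hx⟩ := brouwer_inner (fun x => e (f (e.symm x))) (by fun_prop)
    (‖eL‖ * M) (fun x => by
      refine (eL.le_opNorm _).trans ?_
      gcongr
      exact hM _)
  refine ⟨e.symm x, ?_⟩
  apply e.injective
  simpa using hx

end

section
open Set Filter Topology

lemma ekeland_weak {α : Type*} [MetricSpace α] [CompleteSpace α] (X : Set α) (hX : IsClosed X)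
    (Φ : α → ℝ) (hΦ : ∀ a, IsClosed {x | Φ x ≤ a}) (B : ℝ) (hB : ∀ x ∈ X, B ≤ Φ x)
    (lam : ℝ) (hlam : 0 < lam) (x₀ : α) (hx₀ : x₀ ∈ X) :
    ∃ x ∈ X, Φ x + lam * dist x₀ x ≤ Φ x₀ ∧ ∀ y ∈ X, Φ x - lam * dist x y ≤ Φ y := by
  let S : α → Set α := fun x => {y | y ∈ X ∧ Φ y + lam * dist x y ≤ Φ x}
  have hSself : ∀ x ∈ X, x ∈ S x := fun x hx => ⟨hx, by simp⟩
  have hStrans : ∀ x y z, y ∈ S x → z ∈ S y → z ∈ S x := by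
    intro x y z hy hz
    refine ⟨hz.1, ?_⟩
    have := dist_triangle x y z
    nlinarith [hy.2, hz.2]
  have hstep : ∀ (n : ℕ) (x : X), ∃ y : X, (y : α) ∈ S x ∧ ∀ z ∈ S x, Φ y ≤ Φ z + (1/2:ℝ)^n := by
    intro n x
    have hne : (Φ '' S x).Nonempty := ⟨_, x, hSself x x.2, rfl⟩
    have hbd : BddBelow (Φ '' S x) := ⟨B, by rintro _ ⟨z, hz, rfl⟩; exact hB z hz.1⟩
    obtain ⟨_, ⟨y, hy, rfl⟩, hlt⟩ := exists_lt_of_csInf_lt hne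
      (lt_add_of_pos_right (sInf (Φ '' S x)) (by positivity : (0:ℝ) < (1/2)^n))
    refine ⟨⟨y, hy.1⟩, hy, fun z hz => ?_⟩
    have := csInf_le hbd ⟨z, hz, rfl⟩
    linarith
  choose nxt hnxt1 hnxt2 using hstep
  let u : ℕ → X := fun n => Nat.rec (motive := fun _ => X) ⟨x₀, hx₀⟩ (fun n x => nxt n x) n
  have hu0 : ((u 0 : X) : α) = x₀ := rfl
  have hu : ∀ n, u (n+1) = nxt n (u n) := fun n => rfl
  have hmem : ∀ n m, n ≤ m → (u m : α) ∈ S (u n) := by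
    intro n m hnm
    induction m, hnm using Nat.le_induction with
    | base => exact hSself _ (u n).2
    | succ m _ ih => exact hStrans _ _ _ ih (by rw [hu]; exact hnxt1 m (u m))
  let a : ℕ → ℝ := fun n => Φ (u n)
  have ha : Antitone a := by
    intro n m hnm
    have := (hmem n m hnm).2
    have h2 : 0 ≤ lam * dist (u n : α) (u m) := by positivity
    show Φ (u m) ≤ Φ (u n)
    linarith
  have hbd : BddBelow (range a) := ⟨B, by rintro _ ⟨n, rfl⟩; exact hB _ (u n).2⟩
  have hlim := tendsto_atTop_ciInf ha hbd
  set l := ⨅ n, a n with hl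
  have hla : ∀ n, l ≤ a n := fun n => ciInf_le hbd n
  have hcau : CauchySeq (fun n => (u n : α)) := by
    refine cauchySeq_of_le_tendsto_0' (fun n => (a n - l) / lam) (fun n m hnm => ?_) ?_
    · rw [le_div_iff₀ hlam]
      have := (hmem n m hnm).2
      have := hla m
      show dist (u n : α) (u m) * lam ≤ Φ (u n) - l
      have : l ≤ Φ (u m) := this
      linarith
    · have : Tendsto (fun n => (a n - l) / lam) atTop (𝓝 ((l - l) / lam)) :=
        (hlim.sub_const l).div_const lam
      simpa using this
  obtain ⟨x, hx⟩ := cauchySeq_tendsto_of_complete hcau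
  have hxX : x ∈ X := hX.mem_of_tendsto hx (Eventually.of_forall fun n => (u n).2)
  have hΦx : ∀ n, Φ x ≤ a n := fun n =>
    (hΦ (a n)).mem_of_tendsto hx (eventually_atTop.2 ⟨n, fun m hm => ha hm⟩)
  have hΦl : Φ x ≤ l := le_ciInf hΦx
  have hxS : ∀ n, x ∈ S (u n) := by
    intro n
    refine ⟨hxX, ?_⟩
    have h1 : lam * dist (u n : α) x ≤ a n - l := by
      refine le_of_tendsto ((tendsto_const_nhds.dist hx).const_mul lam)
        (eventually_atTop.2 ⟨n, fun m hm => ?_⟩)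
      have h3 := (hmem n m hm).2
      have h4 : l ≤ Φ (u m) := hla m
      show _ ≤ Φ (u n) - l
      linarith
    show _ ≤ a n
    linarith
  refine ⟨x, hxX, by simpa [hu0] using (hxS 0).2, fun y hy => ?_⟩
  by_contra! hlt
  have hyS : y ∈ S x := ⟨hy, by linarith⟩
  have h1 : ∀ n : ℕ, Φ x ≤ Φ y + (1/2:ℝ)^n := by
    intro n
    have := hnxt2 n (u n) y (hStrans _ _ _ (hxS n) hyS)
    rw [← hu] at this
    exact (hΦx (n+1)).trans this
  have h2 : Φ x ≤ Φ y := by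
    have : Tendsto (fun n : ℕ => Φ y + (1/2:ℝ)^n) atTop (𝓝 (Φ y + 0)) :=
      tendsto_const_nhds.add (tendsto_pow_atTop_nhds_zero_of_lt_one (by norm_num) (by norm_num))
    rw [add_zero] at this
    exact ge_of_tendsto' this h1
  have : 0 ≤ lam * dist x y := by positivity
  linarith

lemma unif_diff {H : Type*} [NormedAddCommGroup H] [NormedSpace ℝ H] (ψ : H → ℝ)
    (hψ : ContDiff ℝ 1 ψ) (C : Set H) (hC : IsCompact C) (κ : ℝ) (hκ : 0 < κ) :
    ∃ s > 0, ∀ u ∈ C, ∀ w, ‖w‖ ≤ s → |ψ (u + w) - ψ u - fderiv ℝ ψ u w| ≤ κ * ‖w‖ := by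
  have hc : Continuous (fderiv ℝ ψ) := hψ.continuous_fderiv (by norm_num)
  have hd : Differentiable ℝ ψ := hψ.differentiable (by norm_num)
  have := hC.uniformContinuousAt_of_continuousAt (fderiv ℝ ψ) (fun _ _ => hc.continuousAt)
    (Metric.dist_mem_uniformity hκ)
  obtain ⟨s, hs, h⟩ := Metric.mem_uniformity_dist.1 this
  refine ⟨s / 2, by positivity, fun u hu w hw => ?_⟩
  have h2 : ∀ y ∈ Metric.ball u s, ‖fderiv ℝ ψ y - fderiv ℝ ψ u‖ ≤ κ := by
    intro y hy
    have : dist (fderiv ℝ ψ u) (fderiv ℝ ψ y) < κ := by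
      have h3 := @h u y (by rw [dist_comm]; exact hy)
      exact h3 hu
    rw [dist_comm, dist_eq_norm] at this
    exact this.le
  have h3 := (convex_ball u s).norm_image_sub_le_of_norm_fderiv_le' (f := ψ) (fun z _ => hd z) h2
    (Metric.mem_ball_self hs) (y := u + w) (by
      rw [Metric.mem_ball, dist_eq_norm, add_sub_cancel_left]; linarith)
  rw [add_sub_cancel_left] at h3
  exact h3

lemma minimax_aux {H : Type*} [NormedAddCommGroup H] [NormedSpace ℝ H] [CompleteSpace H]
    {K : Type*} [TopologicalSpace K] [CompactSpace K] [T2Space K] [Nonempty K]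
    (ψ θ : H → ℝ) (hψ : ContDiff ℝ 1 ψ) (ε lam : ℝ) (hε : 0 ≤ ε) (hlam : 0 < lam)
    (hθ : ∀ x y, |θ x - θ y| ≤ ε * ‖x - y‖)
    (X : Set C(K, H)) (hX : IsClosed X) (I I' g : ℝ) (hI : I' < I)
    (hstab : ∀ F ∈ X, ∀ F' : C(K, H), (∀ x, ψ (F x) + θ (F x) ≤ I' → F' x = F x) →
      (∀ x, ∀ s ∈ Icc (0:ℝ) 1, ψ (F x + s • (F' x - F x)) ≤ ψ (F x)) → F' ∈ X)
    (hlow : ∀ F ∈ X, ∃ x, I ≤ ψ (F x) + θ (F x))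
    (F₀ : C(K, H)) (hF₀ : F₀ ∈ X) (hF₀g : ∀ x, ψ (F₀ x) + θ (F₀ x) ≤ I + g) :
    ∃ F ∈ X, ∃ x, (∀ y, ‖F y - F₀ y‖ ≤ g / lam) ∧ I ≤ ψ (F x) + θ (F x) ∧
      ψ (F x) + θ (F x) ≤ I + g ∧ ‖fderiv ℝ ψ (F x)‖ ≤ ε + 2 * lam := by
  have hψc : Continuous ψ := hψ.continuous
  have hψ'c : Continuous (fderiv ℝ ψ) := hψ.continuous_fderiv (by norm_num)
  have hθc : Continuous θ := by
    have : LipschitzWith (Real.toNNReal ε) θ := LipschitzWith.of_dist_le_mul fun x y => by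
      rw [Real.coe_toNNReal _ hε, dist_eq_norm, dist_eq_norm]; exact hθ x y
    exact this.continuous
  let χ : H → ℝ := fun u => ψ u + θ u
  have hχ : Continuous χ := hψc.add hθc
  let Φ : C(K, H) → ℝ := fun F => ⨆ x, χ (F x)
  have hbdd : ∀ F : C(K, H), BddAbove (range fun x => χ (F x)) := fun F =>
    (isCompact_range (hχ.comp F.continuous)).bddAbove
  have hle : ∀ (F : C(K, H)) x, χ (F x) ≤ Φ F := fun F x => le_ciSup (hbdd F) x
  have hmax : ∀ F : C(K, H), ∃ x, χ (F x) = Φ F := by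
    intro F
    obtain ⟨x, -, hx⟩ := isCompact_univ.exists_isMaxOn univ_nonempty
      (hχ.comp F.continuous).continuousOn
    exact ⟨x, le_antisymm (hle F x) (ciSup_le fun y => hx (mem_univ y))⟩
  have hΦc : ∀ a, IsClosed {F | Φ F ≤ a} := by
    intro a
    have : {F | Φ F ≤ a} = ⋂ x, {F : C(K, H) | χ (F x) ≤ a} := by
      ext F
      simp only [mem_ofPred_eq, mem_iInter]
      exact ⟨fun h x => (hle F x).trans h, fun h => ciSup_le h⟩
    rw [this]
    exact isClosed_iInter fun x =>
      isClosed_le (hχ.comp (continuous_eval_const x)) continuous_const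
  have hΦI : ∀ F ∈ X, I ≤ Φ F := fun F hF => by
    obtain ⟨x, hx⟩ := hlow F hF
    exact hx.trans (hle F x)
  obtain ⟨F, hF, hFd, hmin⟩ := ekeland_weak X hX Φ hΦc I hΦI lam hlam F₀ hF₀
  have hΦ0 : Φ F₀ ≤ I + g := ciSup_le hF₀g
  have hd : dist F₀ F ≤ g / lam := by
    rw [le_div_iff₀ hlam]
    have := hΦI F hF
    linarith
  have hFle : Φ F ≤ I + g := by
    have : 0 ≤ lam * dist F₀ F := by positivity
    linarith
  let μ := ε + 2 * lam
  have hμ : 0 < μ := by positivity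
  by_cases hex : ∃ x, χ (F x) = Φ F ∧ ‖fderiv ℝ ψ (F x)‖ ≤ μ
  · obtain ⟨x, hx1, hx2⟩ := hex
    refine ⟨F, hF, x, fun y => ?_, ?_, ?_, hx2⟩
    · rw [← dist_eq_norm, dist_comm]
      exact (ContinuousMap.dist_apply_le_dist y).trans hd
    · exact (hΦI F hF).trans hx1.ge
    · exact hx1.le.trans hFle
  exfalso
  push Not at hex
  -- selection of a descent direction
  let t : K → Set H := fun x => {v | ‖v‖ ≤ 1 ∧ (χ (F x) = Φ F → μ < fderiv ℝ ψ (F x) v) ∧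
    (χ (F x) ≤ I' → v = 0) ∧ μ * ‖v‖ ≤ fderiv ℝ ψ (F x) v}
  have htconv : ∀ x, Convex ℝ (t x) := by
    intro x v hv w hw a b ha hb hab
    have hn : ‖a • v + b • w‖ ≤ a * ‖v‖ + b * ‖w‖ := by
      refine (norm_add_le _ _).trans ?_
      rw [norm_smul, norm_smul, Real.norm_of_nonneg ha, Real.norm_of_nonneg hb]
    refine ⟨?_, fun h => ?_, fun h => ?_, ?_⟩
    · nlinarith [hv.1, hw.1]
    · have h1 := hv.2.1 h
      have h2 := hw.2.1 h
      simp only [map_add, map_smul, smul_eq_mul]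
      rcases ha.eq_or_lt with h0 | h0
      · have : b = 1 := by linarith
        subst this; simp [← h0, h2]
      · nlinarith
    · rw [hv.2.2.1 h, hw.2.2.1 h]; simp
    · have h1 := hv.2.2.2
      have h2 := hw.2.2.2
      simp only [map_add, map_smul, smul_eq_mul]
      nlinarith
  have hloc : ∀ x : K, ∃ c : H, ∀ᶠ y in 𝓝 x, c ∈ t y := by
    intro x
    by_cases hx : χ (F x) = Φ F
    · obtain ⟨v, hv1, hv2⟩ := (fderiv ℝ ψ (F x)).exists_lt_apply_of_lt_opNorm (hex x hx)
      have : ∃ v : H, ‖v‖ ≤ 1 ∧ μ < fderiv ℝ ψ (F x) v := by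
        rcases le_total 0 (fderiv ℝ ψ (F x) v) with h | h
        · exact ⟨v, hv1.le, by rwa [Real.norm_of_nonneg h] at hv2⟩
        · exact ⟨-v, by rw [norm_neg]; exact hv1.le, by
            rw [map_neg]; rwa [Real.norm_of_nonpos h] at hv2⟩
      obtain ⟨v, hv1, hv2⟩ := this
      refine ⟨v, ?_⟩
      have e1 : ∀ᶠ y in 𝓝 x, μ < fderiv ℝ ψ (F y) v := by
        have : Continuous fun y => fderiv ℝ ψ (F y) v :=
          (hψ'c.comp F.continuous).clm_apply continuous_const
        exact this.continuousAt.eventually_const_lt hv2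
      have e2 : ∀ᶠ y in 𝓝 x, I' < χ (F y) := by
        refine (hχ.comp F.continuous).continuousAt.eventually_const_lt ?_
        show I' < χ (F x)
        rw [hx]; exact hI.trans_le (hΦI F hF)
      filter_upwards [e1, e2] with y h1 h2
      exact ⟨hv1, fun _ => h1, fun h => absurd h2 (not_lt.2 h), by nlinarith⟩
    · refine ⟨0, ?_⟩
      have : ∀ᶠ y in 𝓝 x, χ (F y) ≠ Φ F :=
        (hχ.comp F.continuous).continuousAt.eventually_ne hx
      filter_upwards [this] with y hy
      exact ⟨by simp, fun h => absurd h hy, fun _ => rfl, by simp⟩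
  obtain ⟨v, hv⟩ := exists_continuous_forall_mem_convex_of_local_const htconv hloc
  obtain ⟨s₀, hs₀, hunif⟩ := unif_diff ψ hψ (range F) (isCompact_range F.continuous) (lam/2)
    (by positivity)
  -- gap away from the set of maxima
  have hcontv : Continuous fun y => fderiv ℝ ψ (F y) (v y) :=
    (hψ'c.comp F.continuous).clm_apply v.continuous
  obtain ⟨η, hη, hgap⟩ : ∃ η > 0, ∀ x, fderiv ℝ ψ (F x) (v x) ≤ μ → χ (F x) ≤ Φ F - η := by
    have hcl : IsClosed {x | fderiv ℝ ψ (F x) (v x) ≤ μ} := isClosed_le hcontv continuous_const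
    rcases eq_empty_or_nonempty {x | fderiv ℝ ψ (F x) (v x) ≤ μ} with h | h
    · refine ⟨1, one_pos, fun x hx => ?_⟩
      have : x ∈ (∅ : Set K) := h ▸ hx
      exact absurd this (notMem_empty x)
    · obtain ⟨z, hz, hzm⟩ := hcl.isCompact.exists_isMaxOn h (hχ.comp F.continuous).continuousOn
      refine ⟨Φ F - χ (F z), ?_, fun x hx => ?_⟩
      · have hne : χ (F z) ≠ Φ F := fun h => by
          have h1 := (hv z).2.1 h
          have h2 : fderiv ℝ ψ (F z) (v z) ≤ μ := hz
          linarith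
        have := lt_of_le_of_ne (hle F z) hne
        linarith
      · have : χ (F x) ≤ χ (F z) := hzm hx
        linarith
  let s := min s₀ (η / (2 * (ε + lam)))
  have hs : 0 < s := by positivity
  have hs1 : s ≤ s₀ := min_le_left _ _
  have hs2 : s * (ε + lam) < η := by
    have : s ≤ η / (2 * (ε + lam)) := min_le_right _ _
    rw [le_div_iff₀ (by positivity)] at this
    linarith
  have hdesc : ∀ x, ∀ σ, 0 ≤ σ → σ ≤ s → ψ (F x + (-σ) • v x) ≤
      ψ (F x) - σ * (fderiv ℝ ψ (F x) (v x) - lam/2 * ‖v x‖) := by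
    intro x σ h0 h1
    have hn : ‖(-σ) • v x‖ = σ * ‖v x‖ := by
      rw [norm_smul, norm_neg, Real.norm_of_nonneg h0]
    have := hunif (F x) (mem_range_self x) ((-σ) • v x) (by
      rw [hn]; nlinarith [(hv x).1, norm_nonneg (v x)])
    rw [hn, map_smul, smul_eq_mul] at this
    have := (abs_le.1 this).2
    nlinarith
  let F' : C(K, H) := ⟨fun x => F x + (-s) • v x, by fun_prop⟩
  have hF'sub : ∀ x, F' x - F x = (-s) • v x := fun x => by simp [F']
  have hF'X : F' ∈ X := by
    refine hstab F hF F' (fun x hx => ?_) (fun x r hr => ?_)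
    · show F x + (-s) • v x = F x
      rw [(hv x).2.2.1 hx]; simp
    · rw [hF'sub, smul_smul, mul_neg]
      refine (hdesc x (r * s) (mul_nonneg hr.1 hs.le) (by nlinarith [hr.2])).trans ?_
      have h1 := (hv x).2.2.2
      have h2 : 0 ≤ fderiv ℝ ψ (F x) (v x) - lam/2 * ‖v x‖ := by
        have : lam / 2 * ‖v x‖ ≤ μ * ‖v x‖ := by
          gcongr
          simp only [μ]; linarith
        linarith
      have := mul_nonneg (mul_nonneg hr.1 hs.le) h2
      linarith
  have hdist : dist F F' ≤ s := by
    rw [ContinuousMap.dist_le hs.le]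
    intro x
    rw [dist_comm, dist_eq_norm, hF'sub, norm_smul, norm_neg, Real.norm_of_nonneg hs.le]
    nlinarith [(hv x).1]
  have h1 := hmin F' hF'X
  obtain ⟨x, hx⟩ := hmax F'
  have hvx := (hv x).1
  have hvx0 := norm_nonneg (v x)
  have h2 : θ (F' x) ≤ θ (F x) + ε * (s * ‖v x‖) := by
    have := hθ (F' x) (F x)
    rw [hF'sub, norm_smul, norm_neg, Real.norm_of_nonneg hs.le] at this
    linarith [(abs_le.1 this).2]
  have h3 := hdesc x s hs.le le_rfl
  have h4 : χ (F' x) ≤ χ (F x) - s * (fderiv ℝ ψ (F x) (v x) - lam/2 * ‖v x‖) + ε * (s * ‖v x‖) := by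
    show ψ (F x + (-s) • v x) + θ (F' x) ≤ ψ (F x) + θ (F x) - _ + _
    linarith
  have h5 := hle F x
  have hls : lam * dist F F' ≤ lam * s := by gcongr
  have h7 : ε * (s * ‖v x‖) ≤ ε * s := by
    have : s * ‖v x‖ ≤ s * 1 := by gcongr
    nlinarith
  rcases le_or_gt (fderiv ℝ ψ (F x) (v x)) μ with h | h
  · have h6 := hgap x h
    have h8 : 0 ≤ fderiv ℝ ψ (F x) (v x) - lam/2 * ‖v x‖ := by
      have h1 := (hv x).2.2.2
      have : lam / 2 * ‖v x‖ ≤ μ * ‖v x‖ := by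
        gcongr
        simp only [μ]; linarith
      linarith
    have h9 := mul_nonneg hs.le h8
    nlinarith
  · have h8 : s * (μ - lam/2) ≤ s * (fderiv ℝ ψ (F x) (v x) - lam/2 * ‖v x‖) := by
      gcongr
      nlinarith
    have h9 : s * (μ - lam/2) = ε * s + 3/2 * (lam * s) := by simp only [μ]; ring
    have : 0 < lam * s := by positivity
    linarith

end

section
open Set Filter Topology

lemma linking_aux {H : Type*} [NormedAddCommGroup H] [NormedSpace ℝ H]
    (H₁ : Submodule ℝ H) [FiniteDimensional ℝ H₁] (P : H →L[ℝ] H₁) (hP : ∀ x : H₁, P x = x)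
    (δ R : ℝ) (hδ : 0 < δ) (hR : 0 < R) (hR1 : R ≤ 1) (F : H₁ × ℝ → H) (hF : Continuous F)
    (hbot : ∀ x : H₁, ‖x‖ ≤ 2 → F (x, 0) = ((R • retB 1 x : H₁) : H))
    (hside : ∀ (x : H₁) (t : ℝ), ‖x‖ = 2 → 0 ≤ t → t ≤ 1 → F (x, t) = ((R • retB 1 x : H₁) : H))
    (htop : ∀ x : H₁, ‖x‖ ≤ 2 → P (F (x, 1)) = 0 → δ < ‖F (x, 1)‖) :
    ∃ (x : H₁) (t : ℝ), ‖x‖ ≤ 2 ∧ 0 ≤ t ∧ t ≤ 1 ∧ P (F (x, t)) = 0 ∧ ‖F (x, t)‖ = δ := by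
  let c : ℝ → ℝ := fun t => max 0 (min 1 t)
  have hc : Continuous c := by fun_prop
  have hc0 : ∀ t, 0 ≤ c t := fun t => le_max_left _ _
  have hc1 : ∀ t, c t ≤ 1 := fun t => max_le zero_le_one (min_le_left _ _)
  have h2 : (0:ℝ) < 2 := by norm_num
  have hr : Continuous (retB 2 : H₁ → H₁) := continuous_retB h2
  let z : H₁ × ℝ → H₁ × ℝ := fun q => (retB 2 q.1, c q.2)
  have hz : Continuous z := by fun_prop
  let T : H₁ × ℝ → H₁ × ℝ := fun q =>
    (retB 2 ((z q).1 - P (F (z q))), c ((z q).2 - (‖F (z q)‖ - δ)))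
  have hT : Continuous T := by fun_prop
  obtain ⟨⟨x, t⟩, hxt⟩ := brouwer_bounded T hT 2 (fun q => by
    rw [Prod.norm_def]
    refine max_le (norm_retB_le h2 _) ?_
    rw [Real.norm_of_nonneg (hc0 _)]
    exact (hc1 _).trans (by norm_num))
  have e1 : retB 2 ((z (x, t)).1 - P (F (z (x, t)))) = x := congrArg Prod.fst hxt
  have e2 : c ((z (x, t)).2 - (‖F (z (x, t))‖ - δ)) = t := congrArg Prod.snd hxt
  have hx2 : ‖x‖ ≤ 2 := by rw [← e1]; exact norm_retB_le h2 _
  have ht0 : 0 ≤ t := by rw [← e2]; exact hc0 _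
  have ht1 : t ≤ 1 := by rw [← e2]; exact hc1 _
  have hzz : z (x, t) = (x, t) := by
    simp only [z, c]
    rw [retB_of_le h2 hx2, min_eq_right ht1, max_eq_right ht0]
  rw [hzz] at e1 e2
  simp only at e1 e2
  have hPF : P (F (x, t)) = 0 := by
    rcases le_or_gt ‖x - P (F (x, t))‖ 2 with h | h
    · rw [retB_of_le h2 h] at e1
      simpa using e1
    · exfalso
      have hxn : ‖x‖ = 2 := by rw [← e1]; exact norm_retB_of_ge h2 h.le
      rw [hside x t hxn ht0 ht1, hP] at h
      have : x - R • retB 1 x = (1 - R / 2) • x := by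
        rw [retB, hxn, max_eq_right (by norm_num), smul_smul, sub_smul, one_smul]
        congr 2; ring
      rw [this, norm_smul, Real.norm_of_nonneg (by linarith), hxn] at h
      linarith
  refine ⟨x, t, hx2, ht0, ht1, hPF, ?_⟩
  by_contra hne
  rcases lt_or_gt_of_ne hne with h | h
  · -- norm less than δ
    have h3 : t = 1 := by
      by_contra h1
      have hlt : t < 1 := lt_of_le_of_ne ht1 h1
      simp only [c] at e2
      have : t < max 0 (min 1 (t - (‖F (x, t)‖ - δ))) :=
        lt_max_of_lt_right (lt_min hlt (by linarith))
      linarith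
    subst h3
    linarith [htop x hx2 hPF]
  · have h3 : t = 0 := by
      by_contra h1
      have hlt : 0 < t := lt_of_le_of_ne ht0 (Ne.symm h1)
      simp only [c] at e2
      have : max 0 (min 1 (t - (‖F (x, t)‖ - δ))) < t :=
        max_lt hlt ((min_le_right _ _).trans_lt (by linarith))
      linarith
    subst h3
    rw [hbot x hx2, hP] at hPF
    rw [hbot x hx2, hPF] at h
    simp at h
    linarith

lemma PS_crit {H : Type*} [NormedAddCommGroup H] [NormedSpace ℝ H]
    (ψ : H → ℝ) (hψ : ContDiff ℝ 1 ψ)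
    (hPS : ∀ (a : ℝ) (u : ℕ → H),
      Filter.Tendsto (fun n => ψ (u n)) Filter.atTop (nhds a) →
      Filter.Tendsto (fun n => ‖fderiv ℝ ψ (u n)‖) Filter.atTop (nhds 0) →
      ∃ (φ : ℕ → ℕ), StrictMono φ ∧ ∃ x : H,
        Filter.Tendsto (fun n => u (φ n)) Filter.atTop (nhds x))
    (c : ℝ) (S : Set H) (hS : IsClosed S)
    (h : ∀ ε > 0, ∃ u ∈ S, |ψ u - c| ≤ ε ∧ ‖fderiv ℝ ψ u‖ ≤ ε) :
    ∃ u ∈ S, ψ u = c ∧ fderiv ℝ ψ u = 0 := by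
  have hpos : ∀ n : ℕ, (0:ℝ) < 1 / ((n:ℝ) + 1) := fun n => by positivity
  choose u huS hu1 hu2 using fun n : ℕ => h _ (hpos n)
  have hlim := tendsto_one_div_add_atTop_nhds_zero_nat (𝕜 := ℝ)
  have t1 : Tendsto (fun n => ψ (u n)) atTop (𝓝 c) :=
    tendsto_iff_norm_sub_tendsto_zero.2
      (squeeze_zero (fun _ => norm_nonneg _) hu1 hlim)
  have t2 : Tendsto (fun n => ‖fderiv ℝ ψ (u n)‖) atTop (𝓝 0) :=
    squeeze_zero (fun _ => norm_nonneg _) hu2 hlim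
  obtain ⟨φ, hφ, x, hx⟩ := hPS c u t1 t2
  refine ⟨x, hS.mem_of_tendsto hx (Eventually.of_forall fun n => huS _), ?_, ?_⟩
  · exact tendsto_nhds_unique ((hψ.continuous.tendsto x).comp hx) (t1.comp hφ.tendsto_atTop)
  · have hc : Continuous fun u => ‖fderiv ℝ ψ u‖ := (hψ.continuous_fderiv (by norm_num)).norm
    exact norm_eq_zero.1
      (tendsto_nhds_unique ((hc.tendsto x).comp hx) (t2.comp hφ.tendsto_atTop))

lemma minimax_crit {H : Type*} [NormedAddCommGroup H] [NormedSpace ℝ H] [CompleteSpace H]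
    {K : Type*} [TopologicalSpace K] [CompactSpace K] [T2Space K] [Nonempty K]
    (ψ : H → ℝ) (hψ : ContDiff ℝ 1 ψ)
    (hPS : ∀ (a : ℝ) (u : ℕ → H),
      Filter.Tendsto (fun n => ψ (u n)) Filter.atTop (nhds a) →
      Filter.Tendsto (fun n => ‖fderiv ℝ ψ (u n)‖) Filter.atTop (nhds 0) →
      ∃ (φ : ℕ → ℕ), StrictMono φ ∧ ∃ x : H,
        Filter.Tendsto (fun n => u (φ n)) Filter.atTop (nhds x))
    (X : Set C(K, H)) (hX : IsClosed X) (hXne : X.Nonempty) (I I' : ℝ) (hI : I' < I)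
    (hstab : ∀ F ∈ X, ∀ F' : C(K, H), (∀ x, ψ (F x) ≤ I' → F' x = F x) →
      (∀ x, ∀ s ∈ Icc (0:ℝ) 1, ψ (F x + s • (F' x - F x)) ≤ ψ (F x)) → F' ∈ X)
    (hlow : ∀ F ∈ X, ∃ x, I ≤ ψ (F x)) :
    ∃ u, fderiv ℝ ψ u = 0 ∧ I ≤ ψ u ∧ ∀ F ∈ X, ∃ x, ψ u ≤ ψ (F x) := by
  let A : Set ℝ := {a | ∃ F ∈ X, ∀ x, ψ (F x) ≤ a}
  have hmax : ∀ F : C(K, H), ∃ x, ∀ y, ψ (F y) ≤ ψ (F x) := by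
    intro F
    obtain ⟨x, -, hx⟩ := isCompact_univ.exists_isMaxOn univ_nonempty
      (hψ.continuous.comp F.continuous).continuousOn
    exact ⟨x, fun y => hx (mem_univ y)⟩
  have hAne : A.Nonempty := by
    obtain ⟨F, hF⟩ := hXne
    obtain ⟨x, hx⟩ := hmax F
    exact ⟨_, F, hF, hx⟩
  have hAI : ∀ a ∈ A, I ≤ a := by
    rintro a ⟨F, hF, ha⟩
    obtain ⟨x, hx⟩ := hlow F hF
    exact hx.trans (ha x)
  have hAb : BddBelow A := ⟨I, hAI⟩
  set c := sInf A with hc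
  have hIc : I ≤ c := le_csInf hAne hAI
  have hcF : ∀ F ∈ X, ∃ x, c ≤ ψ (F x) := by
    intro F hF
    obtain ⟨x, hx⟩ := hmax F
    exact ⟨x, csInf_le hAb ⟨F, hF, hx⟩⟩
  obtain ⟨u, -, hu1, hu2⟩ := PS_crit ψ hψ hPS c univ isClosed_univ (by
    intro ε hε
    obtain ⟨a, ⟨F₀, hF₀, ha⟩, hac⟩ := exists_lt_of_csInf_lt hAne
      (lt_add_of_pos_right (sInf A) hε)
    obtain ⟨F, hF, x, -, h1, h2, h3⟩ := minimax_aux ψ (fun _ => 0) hψ 0 (ε/2) le_rfl (by positivity)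
      (by simp) X hX c I' ε (hI.trans_le hIc) (by simpa using hstab) (by simpa using hcF) F₀ hF₀
      (fun x => by simpa using (ha x).trans hac.le)
    refine ⟨F x, mem_univ _, ?_, by linarith⟩
    rw [abs_le]
    constructor <;> simp at h1 h2 <;> linarith)
  exact ⟨u, hu2, hu1 ▸ hIc, fun F hF => by rw [hu1]; exact hcF F hF⟩

lemma near_min {H : Type*} [NormedAddCommGroup H] [NormedSpace ℝ H] [CompleteSpace H]
    (ψ : H → ℝ) (hψ : ContDiff ℝ 1 ψ) (m : ℝ) (hm : ∀ u, m ≤ ψ u) (u : H) (g lam : ℝ)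
    (hlam : 0 < lam) (hu : ψ u ≤ m + g) :
    ∃ w, ‖w - u‖ ≤ g / lam ∧ ψ w ≤ m + g ∧ ‖fderiv ℝ ψ w‖ ≤ 2 * lam := by
  obtain ⟨F, -, x, h1, -, h2, h3⟩ := minimax_aux (K := Unit) ψ (fun _ => 0) hψ 0 lam le_rfl hlam
    (by simp) univ isClosed_univ m (m - 1) g (by linarith) (fun _ _ _ _ _ => mem_univ _)
    (fun F _ => ⟨(), by simpa using hm _⟩) (ContinuousMap.const Unit u) (mem_univ _)
    (fun _ => by simpa using hu)
  exact ⟨F x, by simpa using h1 x, by simpa using h2, by simpa using h3⟩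

lemma linhom {K H : Type*} [TopologicalSpace K] [NormedAddCommGroup H] [NormedSpace ℝ H]
    (Q : K → H → Prop) (f g : C(K, H))
    (h : ∀ x, ∀ s ∈ Icc (0:ℝ) 1, Q x (f x + s • (g x - f x))) :
    ContinuousMap.HomotopicWith f g (fun γ => ∀ x, Q x (γ x)) :=
  ⟨{ toFun := fun q => f q.2 + (q.1 : ℝ) • (g q.2 - f q.2)
     continuous_toFun := by fun_prop
     map_zero_left := by simp
     map_one_left := by simp
     prop' := fun t x => h x t t.2 }⟩

end

section
open Set Filter Topology

lemma push_down {H : Type*} [NormedAddCommGroup H] [NormedSpace ℝ H]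
    {K : Type*} [TopologicalSpace K] [CompactSpace K] [T2Space K] [Nonempty K]
    (ψ : H → ℝ) (hψ : ContDiff ℝ 1 ψ) (ι : C(K, H)) (h0 : ∀ x, ψ (ι x) ≤ 0)
    (hc : ∀ x, fderiv ℝ ψ (ι x) ≠ 0) :
    ∃ (χ : C(K, H)) (e : ℝ), 0 < e ∧ (∀ x, ψ (χ x) ≤ -e) ∧
      ContinuousMap.HomotopicWith ι χ (fun γ => ∀ x, ψ (γ x) < 0 ∨ γ x = ι x) := by
  have hfc : Continuous fun u => fderiv ℝ ψ u := hψ.continuous_fderiv (by norm_num)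
  obtain ⟨v, hv⟩ := exists_continuous_forall_mem_convex_of_local_const (X := K) (E := H)
    (t := fun x => {v | ‖v‖ ≤ 1 ∧ 0 < fderiv ℝ ψ (ι x) v})
    (by
      intro x
      have h1 : Convex ℝ {v : H | ‖v‖ ≤ 1} := by
        have := convex_closedBall (0:H) 1
        simpa [Metric.closedBall, dist_zero_right] using this
      exact h1.inter (convex_halfSpace_gt (fderiv ℝ ψ (ι x)).isLinear 0))
    (by
      intro x
      obtain ⟨w, hw⟩ : ∃ w, 0 < fderiv ℝ ψ (ι x) w := by
        by_contra hcon
        push Not at hcon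
        apply hc x
        ext w
        have h1 := hcon w
        have h2 := hcon (-w)
        rw [map_neg] at h2
        simp
        linarith
      have hw0 : 0 < ‖w‖ := norm_pos_iff.2 (by rintro rfl; simp at hw)
      refine ⟨‖w‖⁻¹ • w, ?_⟩
      have : Continuous fun y => fderiv ℝ ψ (ι y) (‖w‖⁻¹ • w) := by fun_prop
      have h3 : 0 < fderiv ℝ ψ (ι x) (‖w‖⁻¹ • w) := by
        rw [map_smul, smul_eq_mul]; positivity
      filter_upwards [this.continuousAt.eventually (lt_mem_nhds h3)] with y hy
      refine ⟨?_, hy⟩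
      rw [norm_smul, norm_inv, norm_norm, inv_mul_cancel₀ hw0.ne'])
  have hcv : Continuous fun y => fderiv ℝ ψ (ι y) (v y) := by fun_prop
  obtain ⟨x₀, -, hx₀⟩ := isCompact_univ.exists_isMinOn univ_nonempty hcv.continuousOn
  set k := fderiv ℝ ψ (ι x₀) (v x₀) with hk
  have hkpos : 0 < k := (hv x₀).2
  have hmin : ∀ x, k ≤ fderiv ℝ ψ (ι x) (v x) := fun x => hx₀ (mem_univ x)
  obtain ⟨s, hs, hsu⟩ := unif_diff ψ hψ (range ι) (isCompact_range ι.continuous) (k/2)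
    (by positivity)
  have key : ∀ x, ∀ r, 0 ≤ r → r ≤ s → ψ (ι x - r • v x) ≤ - (k/2) * r := by
    intro x r hr hrs
    have hn : ‖-(r • v x)‖ ≤ r := by
      rw [norm_neg, norm_smul, Real.norm_of_nonneg hr]
      exact mul_le_of_le_one_right hr (hv x).1
    have := hsu (ι x) (mem_range_self x) (-(r • v x)) (hn.trans hrs)
    rw [abs_le] at this
    have h2 := this.2
    rw [map_neg, map_smul, smul_eq_mul, ← sub_eq_add_neg] at h2
    have h3 := h0 x
    have h4 : k * r ≤ r * fderiv ℝ ψ (ι x) (v x) := by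
      rw [mul_comm]; exact mul_le_mul_of_nonneg_left (hmin x) hr
    have h5 : k/2 * ‖-(r • v x)‖ ≤ k/2 * r := by gcongr
    linarith
  refine ⟨ι - s • v, k/2 * s, by positivity, fun x => ?_, ?_⟩
  · have := key x s hs.le le_rfl
    simp only [ContinuousMap.sub_apply, ContinuousMap.smul_apply]
    linarith
  · refine linhom (fun x u => ψ u < 0 ∨ u = ι x) _ _ ?_
    rintro x r ⟨hr0, hr1⟩
    have e : ι x + r • ((ι - s • v) x - ι x) = ι x - (r * s) • v x := by
      simp only [ContinuousMap.sub_apply, ContinuousMap.smul_apply]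
      module
    rw [e]
    rcases hr0.eq_or_lt with h | h
    · right; simp [← h]
    · left
      have := key x (r * s) (by positivity) (mul_le_of_le_one_left hs.le hr1)
      have : 0 < k/2 * (r*s) := by positivity
      linarith

lemma near_min_ball {H : Type*} [NormedAddCommGroup H] [NormedSpace ℝ H] [CompleteSpace H]
    (ψ : H → ℝ) (hψ : ContDiff ℝ 1 ψ)
    (hPS : ∀ (a : ℝ) (u : ℕ → H),
      Filter.Tendsto (fun n => ψ (u n)) Filter.atTop (nhds a) →
      Filter.Tendsto (fun n => ‖fderiv ℝ ψ (u n)‖) Filter.atTop (nhds 0) →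
      ∃ (φ : ℕ → ℕ), StrictMono φ ∧ ∃ x : H,
        Filter.Tendsto (fun n => u (φ n)) Filter.atTop (nhds x))
    (u₀ : H) (hmin : ∀ u, ψ u₀ ≤ ψ u)
    (huniq : ∀ u, ψ u = ψ u₀ → fderiv ℝ ψ u = 0 → u = u₀) (r : ℝ) (hr : 0 < r) :
    ∃ η > 0, ∀ u, ψ u < ψ u₀ + η → ‖u - u₀‖ < r := by
  by_contra hcon
  push Not at hcon
  obtain ⟨u, hu, h1, h2⟩ := PS_crit ψ hψ hPS (ψ u₀) {u | r/2 ≤ ‖u - u₀‖}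
    (isClosed_le continuous_const (by fun_prop)) (by
      intro ε hε
      set l := min (ε/2) (min 1 (r/2)) with hl
      have hl0 : 0 < l := by positivity
      have hl1 : l ≤ ε/2 := min_le_left _ _
      have hl2 : l ≤ 1 := (min_le_right _ _).trans (min_le_left _ _)
      have hl3 : l ≤ r/2 := (min_le_right _ _).trans (min_le_right _ _)
      obtain ⟨u, hu1, hu2⟩ := hcon (l*l) (by positivity)
      obtain ⟨w, hw1, hw2, hw3⟩ := near_min ψ hψ (ψ u₀) hmin u (l*l) l hl0 hu1.le
      rw [mul_div_assoc, div_self hl0.ne', mul_one] at hw1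
      refine ⟨w, ?_, ?_, by linarith⟩
      · have : ‖u - u₀‖ ≤ ‖w - u‖ + ‖w - u₀‖ := by
          rw [← norm_neg (w - u)]
          calc ‖u - u₀‖ = ‖-(w - u) + (w - u₀)‖ := by congr 1; abel
            _ ≤ _ := norm_add_le _ _
        simp only [mem_ofPred_eq]
        linarith
      · rw [abs_le]
        have := hmin w
        constructor <;> nlinarith)
  rw [huniq u h1 h2] at hu
  simp at hu
  linarith

lemma sphere_contract {H : Type*} [NormedAddCommGroup H] [NormedSpace ℝ H] [CompleteSpace H]
    {K : Type*} [TopologicalSpace K] [CompactSpace K] [T2Space K] [Nonempty K]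
    (ψ : H → ℝ) (hψ : ContDiff ℝ 1 ψ)
    (hPS : ∀ (a : ℝ) (u : ℕ → H),
      Filter.Tendsto (fun n => ψ (u n)) Filter.atTop (nhds a) →
      Filter.Tendsto (fun n => ‖fderiv ℝ ψ (u n)‖) Filter.atTop (nhds 0) →
      ∃ (φ : ℕ → ℕ), StrictMono φ ∧ ∃ x : H,
        Filter.Tendsto (fun n => u (φ n)) Filter.atTop (nhds x))
    (u₀ : H) (hmin : ∀ u, ψ u₀ ≤ ψ u) (hneg : ψ u₀ < 0) (hψ0 : ψ 0 = 0)
    (huniq : ∀ u, fderiv ℝ ψ u = 0 → u = 0 ∨ u = u₀)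
    (ι : C(K, H)) (hι : ∀ x, ψ (ι x) ≤ 0) (hι0 : ∀ x, ι x ≠ 0) (hι1 : ∀ x, ι x ≠ u₀) :
    ContinuousMap.HomotopicWith ι (ContinuousMap.const K u₀)
      (fun γ => ∀ x, ψ (γ x) < 0 ∨ γ x = ι x) := by
  obtain ⟨χ, e, he, hχe, hχ⟩ := push_down ψ hψ ι hι (fun x hx => (huniq _ hx).elim (hι0 x) (hι1 x))
  set Q : C(K, H) → Prop := (fun γ => ∀ x, ψ (γ x) < 0 ∨ γ x = ι x) with hQ
  let X : Set C(K, H) := {γ | ContinuousMap.HomotopicWith ι γ Q ∧ ∀ x, ψ (γ x) ≤ -e}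
  have hlin : ∀ f g : C(K, H), (∀ x, ∀ s ∈ Icc (0:ℝ) 1, ψ (f x + s • (g x - f x)) < 0) →
      ContinuousMap.HomotopicWith f g Q := fun f g h =>
    linhom (fun x u => ψ u < 0 ∨ u = ι x) f g (fun x s hs => Or.inl (h x s hs))
  have hX : IsClosed X := by
    rw [← closure_subset_iff_isClosed]
    intro γ hγ
    have hle : ∀ x, ψ (γ x) ≤ -e := by
      have hcl : IsClosed {γ : C(K, H) | ∀ x, ψ (γ x) ≤ -e} := by
        simp only [ofPred_forall]
        exact isClosed_iInter fun x => isClosed_le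
          (hψ.continuous.comp (continuous_eval_const x)) continuous_const
      exact closure_minimal (fun γ h => h.2) hcl hγ
    refine ⟨?_, hle⟩
    obtain ⟨d, hd, hsub⟩ := (isCompact_range γ.continuous).exists_thickening_subset_open
      (isOpen_lt hψ.continuous continuous_const : IsOpen {u | ψ u < 0})
      (by rintro _ ⟨x, rfl⟩; exact (hle x).trans_lt (by linarith))
    obtain ⟨γ', hγ', hdist⟩ := Metric.mem_closure_iff.1 hγ d hd
    refine hγ'.1.trans ?_
    refine (hlin γ γ' fun x s hs => hsub ?_).symm
    refine Metric.mem_thickening_iff.2 ⟨γ x, mem_range_self x, ?_⟩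
    rw [dist_eq_norm, add_sub_cancel_left, norm_smul, Real.norm_of_nonneg hs.1]
    have h1 : ‖γ' x - γ x‖ < d := by
      rw [← dist_eq_norm, dist_comm]
      exact (ContinuousMap.dist_apply_le_dist x).trans_lt hdist
    have := mul_le_of_le_one_left (norm_nonneg (γ' x - γ x)) hs.2
    linarith
  have hχX : χ ∈ X := ⟨hχ, hχe⟩
  obtain ⟨r, hr, hball⟩ := Metric.isOpen_iff.1
    (isOpen_lt hψ.continuous continuous_const : IsOpen {u | ψ u < 0}) u₀ hneg
  obtain ⟨η, hη, hηr⟩ := near_min_ball ψ hψ hPS u₀ hmin (fun u h1 h2 => by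
    rcases huniq u h2 with h | h
    · rw [h, hψ0] at h1; linarith
    · exact h) r hr
  obtain ⟨γ, hγX, hγ⟩ : ∃ γ ∈ X, ∀ x, ψ (γ x) < ψ u₀ + η := by
    by_contra hcon
    push Not at hcon
    obtain ⟨u, hu, hu1, hu2⟩ := minimax_crit ψ hψ hPS X hX ⟨χ, hχX⟩ (ψ u₀ + η) (ψ u₀)
      (by linarith) (by
        intro F hF F' _ hd
        refine ⟨hF.1.trans (hlin F F' fun x s hs => ?_), fun x => ?_⟩
        · linarith [hd x s hs, hF.2 x]
        · have := hd x 1 (by simp)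
          simp at this
          linarith [hF.2 x]) hcon
    obtain ⟨x, hx⟩ := hu2 χ hχX
    rcases huniq u hu with rfl | rfl
    · linarith [hχe x]
    · linarith
  refine hγX.1.trans (hlin _ _ fun x s hs => hball ?_)
  rw [mem_ball_iff_norm]
  have e : γ x + s • ((ContinuousMap.const K u₀) x - γ x) - u₀ = (1 - s) • (γ x - u₀) := by
    simp only [ContinuousMap.const_apply]; module
  rw [e, norm_smul, Real.norm_of_nonneg (by linarith [hs.2])]
  have := hηr _ (hγ x)
  have := mul_le_of_le_one_left (norm_nonneg (γ x - u₀)) (show 1 - s ≤ 1 by linarith [hs.1])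
  linarith

end

section
open Set Filter Topology

lemma exists_p {H : Type*} [NormedAddCommGroup H] [NormedSpace ℝ H] [CompleteSpace H]
    (H₁ : Submodule ℝ H) [FiniteDimensional ℝ H₁]
    (ψ : H → ℝ) (hψ : ContDiff ℝ 1 ψ)
    (hPS : ∀ (a : ℝ) (u : ℕ → H),
      Filter.Tendsto (fun n => ψ (u n)) Filter.atTop (nhds a) →
      Filter.Tendsto (fun n => ‖fderiv ℝ ψ (u n)‖) Filter.atTop (nhds 0) →
      ∃ (φ : ℕ → ℕ), StrictMono φ ∧ ∃ x : H,
        Filter.Tendsto (fun n => u (φ n)) Filter.atTop (nhds x))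
    (u₀ : H) (hmin : ∀ u, ψ u₀ ≤ ψ u) (hneg : ψ u₀ < 0) (hψ0 : ψ 0 = 0)
    (huniq : ∀ u, fderiv ℝ ψ u = 0 → u = 0 ∨ u = u₀)
    (R : ℝ) (hR : 0 < R) (hRu : R < ‖u₀‖) (hP1 : ∀ u ∈ H₁, ‖u‖ ≤ R → ψ u ≤ 0) :
    ∃ p : H₁ → H, Continuous p ∧ (∀ x : H₁, 2 ≤ ‖x‖ → p x = ((R • retB 1 x : H₁) : H)) ∧
      ∀ x, ψ (p x) < 0 ∨ ∃ y : H₁, ‖y‖ = R ∧ p x = y := by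
  rcases subsingleton_or_nontrivial H₁ with hs | hs
  · refine ⟨fun _ => u₀, continuous_const, fun x hx => ?_, fun x => Or.inl hneg⟩
    rw [Subsingleton.elim x 0, norm_zero] at hx
    linarith
  let K := Metric.sphere (0 : H₁) 1
  have : CompactSpace K := isCompact_iff_compactSpace.1 (isCompact_sphere _ _)
  have : Nonempty K := (NormedSpace.sphere_nonempty.2 zero_le_one).to_subtype
  have hn : ∀ x : K, ‖R • (x : H₁)‖ = R := fun x => by
    rw [norm_smul, Real.norm_of_nonneg hR.le, mem_sphere_zero_iff_norm.1 x.2, mul_one]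
  let ι : C(K, H) := ⟨fun x => ((R • (x : H₁) : H₁) : H), by fun_prop⟩
  have hιn : ∀ x, ‖ι x‖ = R := hn
  obtain ⟨h⟩ := sphere_contract ψ hψ hPS u₀ hmin hneg hψ0 huniq ι
    (fun x => hP1 _ (Submodule.coe_mem (R • (x : H₁))) (hn x).le)
    (fun x hx => by have := hιn x; rw [hx, norm_zero] at this; linarith)
    (fun x hx => by have := hιn x; rw [hx] at this; linarith)
  have hprop : ∀ t x, ψ (h (t, x)) < 0 ∨ h (t, x) = ι x := fun t x => h.prop t x
  have hx1 : ∀ x : H₁, x ≠ 0 → ‖x‖⁻¹ • x ∈ Metric.sphere (0 : H₁) 1 := fun x hx => by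
    rw [mem_sphere_zero_iff_norm, norm_smul, norm_inv, norm_norm,
      inv_mul_cancel₀ (norm_ne_zero_iff.2 hx)]
  classical
  let p : H₁ → H := fun x => if hx : x = 0 then u₀ else
    h (projIcc 0 1 zero_le_one (2 - ‖x‖), ⟨‖x‖⁻¹ • x, hx1 x hx⟩)
  have p0 : p 0 = u₀ := by simp [p]
  have pne : ∀ x (hx : x ≠ 0), p x =
    h (projIcc 0 1 zero_le_one (2 - ‖x‖), ⟨‖x‖⁻¹ • x, hx1 x hx⟩) := fun x hx => by simp [p, hx]
  have pnear : ∀ x, ‖x‖ ≤ 1 → p x = u₀ := by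
    intro x hx
    rcases eq_or_ne x 0 with rfl | h0
    · exact p0
    · rw [pne x h0, projIcc_of_right_le zero_le_one (by linarith)]
      exact h.apply_one _
  refine ⟨p, ?_, ?_, ?_⟩
  · rw [continuous_iff_continuousAt]
    intro x
    rcases eq_or_ne x 0 with rfl | h0
    · have : p =ᶠ[𝓝 0] fun _ => u₀ := by
        filter_upwards [Metric.closedBall_mem_nhds (0 : H₁) one_pos] with y hy
        exact pnear y (mem_closedBall_zero_iff.1 hy)
      exact continuousAt_const.congr this.symm
    · have hopen : IsOpen {x : H₁ | x ≠ 0} := isOpen_ne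
      have hco : ContinuousOn p {x : H₁ | x ≠ 0} := by
        rw [continuousOn_iff_continuous_domRestrict]
        have e : ({x : H₁ | x ≠ 0}.domRestrict p) = fun x : {x : H₁ | x ≠ 0} =>
          h (projIcc 0 1 zero_le_one (2 - ‖(x : H₁)‖), ⟨‖(x:H₁)‖⁻¹ • (x : H₁), hx1 x x.2⟩) := by
          funext x
          exact pne x x.2
        rw [e]
        refine h.continuous.comp (Continuous.prodMk ?_ ?_)
        · exact (continuous_projIcc (h := zero_le_one (α := ℝ))).comp
            (continuous_const.sub (continuous_norm.comp continuous_subtype_val))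
        · refine Continuous.subtype_mk ?_ _
          have c1 : Continuous fun x : {x : H₁ | x ≠ 0} => (x : H₁) := continuous_subtype_val
          exact (c1.norm.inv₀ (fun x => norm_ne_zero_iff.2 x.2)).smul c1
      exact hco.continuousAt (hopen.mem_nhds h0)
  · intro x hx
    have h0 : x ≠ 0 := by rintro rfl; rw [norm_zero] at hx; linarith
    rw [pne x h0, projIcc_of_le_left zero_le_one (by linarith)]
    refine (h.apply_zero _).trans ?_
    simp only [ι, ContinuousMap.coe_mk, retB]
    rw [max_eq_right (by linarith), one_div]
  · intro x
    rcases eq_or_ne x 0 with rfl | h0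
    · left; rw [p0]; exact hneg
    · rw [pne x h0]
      rcases hprop (projIcc 0 1 zero_le_one (2 - ‖x‖)) ⟨‖x‖⁻¹ • x, hx1 x h0⟩ with h1 | h1
      · exact Or.inl h1
      · exact Or.inr ⟨_, hn ⟨_, hx1 x h0⟩, h1⟩

end

section
open Set Filter Topology

lemma linking_crit {H : Type*} [NormedAddCommGroup H] [NormedSpace ℝ H] [CompleteSpace H]
    {K : Type*} [TopologicalSpace K] [CompactSpace K] [T2Space K] [Nonempty K]
    (ψ : H → ℝ) (hψ : ContDiff ℝ 1 ψ)
    (hPS : ∀ (a : ℝ) (u : ℕ → H),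
      Filter.Tendsto (fun n => ψ (u n)) Filter.atTop (nhds a) →
      Filter.Tendsto (fun n => ‖fderiv ℝ ψ (u n)‖) Filter.atTop (nhds 0) →
      ∃ (φ : ℕ → ℕ), StrictMono φ ∧ ∃ x : H,
        Filter.Tendsto (fun n => u (φ n)) Filter.atTop (nhds x))
    (hψ0 : ψ 0 = 0)
    (X : Set C(K, H)) (hX : IsClosed X) (hXne : X.Nonempty) (B : Set K)
    (hstab : ∀ F ∈ X, ∀ F' : C(K, H), (∀ x ∈ B, F' x = F x) → F' ∈ X)
    (S : Set H) (hSψ : ∀ u ∈ S, 0 ≤ ψ u) (δ : ℝ) (hδ : 0 < δ) (hSδ : ∀ u ∈ S, δ ≤ ‖u‖)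
    (hlink : ∀ F ∈ X, ∃ x, F x ∈ S) (hB : ∀ F ∈ X, ∀ x ∈ B, ψ (F x) ≤ 0)
    (d : ℝ) (hd : 0 < d) (hBd : ∀ F ∈ X, ∀ x ∈ B, ∀ u ∈ S, d ≤ ‖F x - u‖) :
    ∃ u, u ≠ 0 ∧ 0 ≤ ψ u ∧ fderiv ℝ ψ u = 0 := by
  by_cases hc : ∃ c > 0, ∀ F ∈ X, ∃ z, c ≤ ψ (F z)
  · obtain ⟨c, hc0, hc⟩ := hc
    obtain ⟨u, hu, hu1, -⟩ := minimax_crit ψ hψ hPS X hX hXne c 0 hc0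
      (fun F hF F' h1 _ => hstab F hF F' fun x hx => h1 x (hB F hF x hx)) hc
    exact ⟨u, by rintro rfl; linarith, by linarith, hu⟩
  push Not at hc
  have hSne : S.Nonempty := by
    obtain ⟨F, hF⟩ := hXne
    obtain ⟨x, hx⟩ := hlink F hF
    exact ⟨_, hx⟩
  obtain ⟨L, t, ht, hL⟩ := (hψ.contDiffAt (x := (0:H))).exists_lipschitzOnWith
  obtain ⟨r₀, hr₀, hball⟩ := Metric.mem_nhds_iff.1 ht
  set r := min (r₀ / 2) (δ / 4) with hr
  have hrpos : 0 < r := by positivity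
  have hr1 : r ≤ r₀ / 2 := min_le_left _ _
  have hr2 : r ≤ δ / 4 := min_le_right _ _
  obtain ⟨u, hu, hu1, hu2⟩ := PS_crit ψ hψ hPS 0 {u | r ≤ ‖u‖}
    (isClosed_le continuous_const continuous_norm) (by
    intro ε₀ hε₀
    obtain ⟨ε, hε, he1, he2, he3, he4⟩ : ∃ ε : ℝ, 0 < ε ∧ ε ≤ ε₀ / 3 ∧ ε ≤ 1 ∧ ε ≤ δ / 2 ∧ ε ≤ d :=
      ⟨min (min (ε₀ / 3) 1) (min (δ/2) d), by positivity,
        (min_le_left _ _).trans (min_le_left _ _), (min_le_left _ _).trans (min_le_right _ _),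
        (min_le_right _ _).trans (min_le_left _ _), (min_le_right _ _).trans (min_le_right _ _)⟩
    have hL0 : (0:ℝ) ≤ L := L.2
    obtain ⟨g, hg, hg1, hg2, hg3⟩ : ∃ g : ℝ, 0 < g ∧ g / ε ≤ r ∧ g ≤ ε^2 / 4 ∧
        L * (g / ε) ≤ ε^2 / 4 := by
      refine ⟨min (ε * r) (min (ε^2/4) (ε^3 / (4 * (L + 1)))), by positivity, ?_, ?_, ?_⟩
      · rw [div_le_iff₀ hε, mul_comm r]; exact min_le_left _ _
      · exact (min_le_right _ _).trans (min_le_left _ _)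
      · have h1 : min (ε * r) (min (ε^2/4) (ε^3 / (4 * ((L:ℝ) + 1)))) ≤ ε^3 / (4 * (L + 1)) :=
          (min_le_right _ _).trans (min_le_right _ _)
        calc (L:ℝ) * (min (ε * r) (min (ε^2/4) (ε^3 / (4 * ((L:ℝ) + 1)))) / ε)
            ≤ (L + 1) * (ε^3 / (4 * (L + 1)) / ε) := by
              gcongr; linarith
          _ = ε^2 / 4 := by field_simp
    let θ : H → ℝ := fun u => max (ε^2 - ε * Metric.infDist u S) 0
    have hθlip : ∀ x y, |θ x - θ y| ≤ ε * ‖x - y‖ := by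
      intro x y
      refine (abs_max_sub_max_le_abs _ _ _).trans ?_
      have h1 := (Metric.lipschitz_infDist_pt S).dist_le_mul x y
      rw [Real.dist_eq, dist_eq_norm, NNReal.coe_one, one_mul] at h1
      have : ε^2 - ε * Metric.infDist x S - (ε^2 - ε * Metric.infDist y S)
        = - (ε * (Metric.infDist x S - Metric.infDist y S)) := by ring
      rw [this, abs_neg, abs_mul, abs_of_pos hε]
      gcongr
    have hθ0 : ∀ u, 0 ≤ θ u := fun u => le_max_right _ _
    have hθ1 : ∀ u, θ u ≤ ε^2 := fun u => by
      refine max_le ?_ (by positivity)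
      have := mul_nonneg hε.le (Metric.infDist_nonneg (x := u) (s := S))
      linarith
    have hθfar : ∀ u, (∀ v ∈ S, ε ≤ ‖u - v‖) → θ u = 0 := fun u h => by
      refine max_eq_right ?_
      have : ε ≤ Metric.infDist u S := by
        rw [Metric.le_infDist hSne]
        intro v hv
        rw [dist_eq_norm]
        exact h v hv
      nlinarith
    have hθS : ∀ u ∈ S, θ u = ε^2 := fun u hu => by
      simp only [θ]
      rw [Metric.infDist_zero_of_mem hu, mul_zero, sub_zero]
      exact max_eq_left (by positivity)
    obtain ⟨F₀, hF₀, hF₀g⟩ := hc g hg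
    obtain ⟨F, hF, x, h1, h2, h3, h4⟩ := minimax_aux ψ θ hψ ε ε hε.le hε hθlip X hX (ε^2) 0 g
      (by positivity) (by
        intro F hF F' h1 _
        refine hstab F hF F' fun x hx => h1 x ?_
        rw [hθfar _ fun v hv => he4.trans (hBd F hF x hx v hv), add_zero]
        exact hB F hF x hx)
      (by
        intro F hF
        obtain ⟨x, hx⟩ := hlink F hF
        exact ⟨x, by rw [hθS _ hx]; linarith [hSψ _ hx]⟩) F₀ hF₀
      (fun x => by linarith [hF₀g x, hθ1 (F₀ x)])
    refine ⟨F x, ?_, ?_, by linarith⟩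
    · by_contra hlt
      simp only [mem_ofPred_eq, not_le] at hlt
      have hz : θ (F x) = 0 := hθfar _ fun v hv => by
        have a1 := hSδ v hv
        have a2 := norm_sub_norm_le v (F x)
        rw [norm_sub_rev] at a2
        linarith
      have hd1 := h1 x
      have m1 : F x ∈ t := hball (by rw [mem_ball_zero_iff]; linarith)
      have m2 : F₀ x ∈ t := hball (by
        rw [mem_ball_zero_iff]
        have a2 := norm_sub_norm_le (F₀ x) (F x)
        rw [norm_sub_rev] at a2
        linarith)
      have hl := hL.dist_le_mul _ m1 _ m2
      rw [Real.dist_eq, dist_eq_norm] at hl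
      have hl2 := (le_abs_self _).trans hl
      have hl3 : (L:ℝ) * ‖F x - F₀ x‖ ≤ L * (g / ε) := by gcongr
      have := hF₀g x
      have : 0 < ε^2 := by positivity
      rw [hz] at h2
      linarith
    · have := hθ0 (F x)
      have := hθ1 (F x)
      have : ε^2 ≤ ε := by nlinarith
      rw [sub_zero, abs_le]
      constructor <;> linarith)
  refine ⟨u, ?_, hu1.ge, hu2⟩
  rintro rfl
  simp at hu
  linarith

/-- Second critical point by linking, when `0` and `u₀` are the only critical points. -/
lemma linking_final {H : Type*} [NormedAddCommGroup H] [NormedSpace ℝ H] [CompleteSpace H]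
    (H₁ : Submodule ℝ H) [FiniteDimensional ℝ H₁] (P : H →L[ℝ] H₁) (hP : ∀ x : H₁, P x = x)
    (ψ : H → ℝ) (hψ : ContDiff ℝ 1 ψ)
    (hPS : ∀ (a : ℝ) (u : ℕ → H),
      Filter.Tendsto (fun n => ψ (u n)) Filter.atTop (nhds a) →
      Filter.Tendsto (fun n => ‖fderiv ℝ ψ (u n)‖) Filter.atTop (nhds 0) →
      ∃ (φ : ℕ → ℕ), StrictMono φ ∧ ∃ x : H,
        Filter.Tendsto (fun n => u (φ n)) Filter.atTop (nhds x))
    (hψ0 : ψ 0 = 0) (δ R : ℝ) (hδ : 0 < δ) (hR : 0 < R) (hR1 : R ≤ 1)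
    (hP1 : ∀ u ∈ H₁, ‖u‖ ≤ R → ψ u ≤ 0) (hP2 : ∀ u, P u = 0 → ‖u‖ ≤ δ → 0 ≤ ψ u)
    (p : H₁ → H) (hp : Continuous p) (hp2 : ∀ x : H₁, 2 ≤ ‖x‖ → p x = ((R • retB 1 x : H₁) : H))
    (hpn : ∀ x, ψ (p x) < 0 ∨ ∃ y : H₁, ‖y‖ = R ∧ p x = y) :
    ∃ u, u ≠ 0 ∧ 0 ≤ ψ u ∧ fderiv ℝ ψ u = 0 := by
  have h2 : (0:ℝ) < 2 := by norm_num
  have : CompactSpace (Metric.closedBall (0 : H₁) 2) :=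
    isCompact_iff_compactSpace.1 (isCompact_closedBall _ _)
  have : Nonempty (Metric.closedBall (0 : H₁) 2) := ⟨⟨0, by simp⟩⟩
  let K := Metric.closedBall (0 : H₁) 2 × unitInterval
  let q : H₁ → H := fun x => ((R • retB 1 x : H₁) : H)
  have hret : Continuous (retB 1 : H₁ → H₁) := continuous_retB one_pos
  have hq : Continuous q := by fun_prop
  -- the boundary map
  let B : Set K := {z | z.2 = 0 ∨ z.2 = 1 ∨ ‖(z.1 : H₁)‖ = 2}
  let F₀ : C(K, H) := ⟨fun z => (1 - (z.2 : ℝ)) • q z.1 + (z.2 : ℝ) • p z.1, by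
    have c1 : Continuous fun z : K => (z.2 : ℝ) := continuous_subtype_val.comp continuous_snd
    have c2 : Continuous fun z : K => (z.1 : H₁) := continuous_subtype_val.comp continuous_fst
    exact ((continuous_const.sub c1).smul (hq.comp c2)).add (c1.smul (hp.comp c2))⟩
  have hF₀0 : ∀ z : K, z.2 = 0 → F₀ z = q z.1 := fun z hz => by simp [F₀, hz]
  have hF₀1 : ∀ z : K, z.2 = 1 → F₀ z = p z.1 := fun z hz => by simp [F₀, hz]
  have hF₀2 : ∀ z : K, ‖(z.1 : H₁)‖ = 2 → F₀ z = q z.1 := fun z hz => by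
    simp only [F₀, ContinuousMap.coe_mk]
    rw [hp2 _ hz.ge]
    change (1 - (z.2 : ℝ)) • q z.1 + (z.2 : ℝ) • q z.1 = q z.1
    module
  have hBqp : ∀ z ∈ B, F₀ z = q z.1 ∨ F₀ z = p z.1 := by
    rintro z (hz | hz | hz)
    · exact Or.inl (hF₀0 z hz)
    · exact Or.inr (hF₀1 z hz)
    · exact Or.inl (hF₀2 z hz)
  have hqn : ∀ x, ‖R • retB 1 x‖ ≤ R := fun x : H₁ => by
    rw [norm_smul, Real.norm_of_nonneg hR.le]
    exact mul_le_of_le_one_right hR.le (norm_retB_le one_pos _)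
  have hqψ : ∀ x, ψ (q x) ≤ 0 := fun x => hP1 _ (Submodule.coe_mem (R • retB 1 x)) (hqn x)
  have hpψ : ∀ x, ψ (p x) ≤ 0 := fun x => by
    rcases hpn x with h | ⟨y, hy, h⟩
    · exact h.le
    · rw [h]; exact hP1 _ y.2 hy.le
  have hptop : ∀ x, P (p x) = 0 → δ < ‖p x‖ := by
    intro x hx
    rcases hpn x with h | ⟨y, hy, h⟩
    · by_contra hle
      linarith [hP2 _ hx (not_lt.1 hle)]
    · rw [h, hP] at hx
      rw [hx, norm_zero] at hy
      linarith
  let S : Set H := {u | P u = 0 ∧ ‖u‖ = δ}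
  have hSc : IsClosed S := (isClosed_eq P.continuous continuous_const).inter
    (isClosed_eq continuous_norm continuous_const)
  have hBc : IsClosed B := by
    refine (isClosed_eq continuous_snd continuous_const).union
      ((isClosed_eq continuous_snd continuous_const).union
      (isClosed_eq (by fun_prop) continuous_const))
  have hBS : ∀ z ∈ B, F₀ z ∉ S := by
    rintro z hz ⟨hS1, hS2⟩
    rcases hBqp z hz with h | h
    · rw [h] at hS1 hS2
      simp only [q] at hS1 hS2
      rw [hP] at hS1
      rw [hS1] at hS2
      simp at hS2
      linarith
    · rw [h] at hS1 hS2
      linarith [hptop _ hS1]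
  obtain ⟨d, hd, hdisj⟩ := ((hBc.isCompact.image F₀.continuous).exists_thickening_subset_open
      hSc.isOpen_compl (by rintro _ ⟨z, hz, rfl⟩; exact hBS z hz))
  let X : Set C(K, H) := {F | ∀ z ∈ B, F z = F₀ z}
  have hXc : IsClosed X := by
    have : X = ⋂ z ∈ B, {F : C(K, H) | F z = F₀ z} := by ext F; simp [X]
    rw [this]
    exact isClosed_biInter fun z _ => isClosed_eq (continuous_eval_const z) continuous_const
  refine linking_crit ψ hψ hPS hψ0 X hXc ⟨F₀, fun _ _ => rfl⟩ B
    (fun F hF F' h z hz => (h z hz).trans (hF z hz)) S (fun u hu => hP2 u hu.1 hu.2.le) δ hδ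
    (fun u hu => hu.2.ge) ?_ ?_ d hd ?_
  · intro F hF
    let c : ℝ → unitInterval := projIcc 0 1 zero_le_one
    have hcc : Continuous c := continuous_projIcc
    have hret2 : Continuous (retB 2 : H₁ → H₁) := continuous_retB h2
    let k : H₁ × ℝ → K := fun w => (⟨retB 2 w.1, by
      rw [mem_closedBall_zero_iff]; exact norm_retB_le h2 _⟩, c w.2)
    have hk : Continuous k := by
      refine Continuous.prodMk (Continuous.subtype_mk (by fun_prop) _) (by fun_prop)
    have hk1 : ∀ x t, ‖x‖ ≤ 2 → ((k (x, t)).1 : H₁) = x := fun x t hx => retB_of_le h2 hx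
    have hc0 : c 0 = 0 := projIcc_left _
    have hc1 : c 1 = 1 := projIcc_right _
    obtain ⟨x, t, -, -, -, h3, h4⟩ := linking_aux H₁ P hP δ R hδ hR hR1 (fun w => F (k w))
      (F.continuous.comp hk)
      (fun x hx => by
        rw [hF (k (x, 0)) (Or.inl hc0), hF₀0 _ hc0, hk1 x 0 hx])
      (fun x t hx _ _ => by
        have e : ‖((k (x, t)).1 : H₁)‖ = 2 := by rw [hk1 x t hx.le, hx]
        rw [hF (k (x, t)) (Or.inr (Or.inr e)), hF₀2 _ e, hk1 x t hx.le])
      (fun x hx => by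
        rw [hF (k (x, 1)) (Or.inr (Or.inl hc1)), hF₀1 _ hc1, hk1 x 1 hx]
        exact hptop x)
    exact ⟨k (x, t), h3, h4⟩
  · intro F hF z hz
    rw [hF z hz]
    rcases hBqp z hz with h | h
    · rw [h]; exact hqψ _
    · rw [h]; exact hpψ _
  · intro F hF z hz u hu
    by_contra hlt
    rw [hF z hz, not_le] at hlt
    refine hdisj (Metric.mem_thickening_iff.2 ⟨F₀ z, mem_image_of_mem _ hz, ?_⟩) hu
    rwa [dist_comm, dist_eq_norm]

end

end BNHelpers

/-- Brezis–Nirenberg critical point theorem (Lemma 2.2 of the paper). -/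
theorem statement_1
    (H : Type*) [NormedAddCommGroup H] [NormedSpace ℝ H] [CompleteSpace H]
    (H₁ H₂ : Submodule ℝ H) (hcompl : IsCompl H₁ H₂)
    (hH₁closed : IsClosed (H₁ : Set H)) (hH₂closed : IsClosed (H₂ : Set H))
    [FiniteDimensional ℝ H₁]
    (ψ : H → ℝ) (hψC1 : ContDiff ℝ 1 ψ) (hψ0 : ψ 0 = 0)
    -- Palais–Smale condition
    (hPS : ∀ (a : ℝ) (u : ℕ → H),
      Filter.Tendsto (fun n => ψ (u n)) Filter.atTop (nhds a) →
      Filter.Tendsto (fun n => ‖fderiv ℝ ψ (u n)‖) Filter.atTop (nhds 0) →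
      ∃ (φ : ℕ → ℕ), StrictMono φ ∧ ∃ x : H,
        Filter.Tendsto (fun n => u (φ n)) Filter.atTop (nhds x))
    (δ : ℝ) (hδ : 0 < δ)
    -- (P1)
    (hP1 : ∀ u ∈ H₁, ‖u‖ ≤ δ → ψ u ≤ 0)
    -- (P2)
    (hP2 : ∀ u ∈ H₂, ‖u‖ ≤ δ → 0 ≤ ψ u)
    -- (P3)
    (hbdd : BddBelow (Set.range ψ)) (hinf : (⨅ u : H, ψ u) < 0) :
    ∃ u v : H, u ≠ 0 ∧ v ≠ 0 ∧ u ≠ v ∧ fderiv ℝ ψ u = 0 ∧ fderiv ℝ ψ v = 0 := by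
  have hgl : ∀ u, (⨅ u : H, ψ u) ≤ ψ u := fun u => ciInf_le hbdd u
  obtain ⟨u₀, hu₀, -, hu₀m⟩ := minimax_crit (K := Unit) ψ hψC1 hPS Set.univ isClosed_univ
    Set.univ_nonempty (⨅ u : H, ψ u) ((⨅ u : H, ψ u) - 1) (by linarith)
    (fun _ _ _ _ _ => Set.mem_univ _) (fun F _ => ⟨(), hgl _⟩)
  have hmin : ∀ u, ψ u₀ ≤ ψ u := fun u => by
    obtain ⟨_, hx⟩ := hu₀m (ContinuousMap.const Unit u) (Set.mem_univ _)
    exact hx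
  have hneg : ψ u₀ < 0 := (le_ciInf hmin).trans_lt hinf
  have hu₀0 : u₀ ≠ 0 := by rintro rfl; linarith
  by_contra hcon
  have huniq : ∀ u, fderiv ℝ ψ u = 0 → u = 0 ∨ u = u₀ := by
    intro u hu
    by_contra hne
    push Not at hne
    exact hcon ⟨u, u₀, hne.1, hu₀0, hne.2, hu, hu₀⟩
  have htc : Submodule.IsTopCompl H₁ H₂ :=
    Submodule.IsCompl.isTopCompl_of_isClosed hcompl hH₁closed hH₂closed
  have hun : 0 < ‖u₀‖ := norm_pos_iff.2 hu₀0
  obtain ⟨R, hR, hR1, hRδ, hRu⟩ : ∃ R : ℝ, 0 < R ∧ R ≤ 1 ∧ R ≤ δ ∧ R ≤ ‖u₀‖ / 2 :=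
    ⟨min 1 (min δ (‖u₀‖ / 2)), by positivity, min_le_left _ _,
      (min_le_right _ _).trans (min_le_left _ _), (min_le_right _ _).trans (min_le_right _ _)⟩
  have hP1' : ∀ u ∈ H₁, ‖u‖ ≤ R → ψ u ≤ 0 := fun u hu h => hP1 u hu (h.trans hRδ)
  obtain ⟨p, hp, hp2, hpn⟩ := exists_p H₁ ψ hψC1 hPS u₀ hmin hneg hψ0 huniq R hR
    (by linarith) hP1'
  obtain ⟨u, hu0, huψ, hu⟩ := linking_final H₁ (H₁.projectionOntoL H₂ htc)
    (Submodule.projectionOntoL_apply_left htc) ψ hψC1 hPS hψ0 δ R hδ hR hR1 hP1'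
    (fun u h => hP2 u ((Submodule.projectionOntoL_apply_eq_zero_iff htc).1 h)) p hp hp2 hpn
  rcases huniq u hu with rfl | rfl
  · exact hu0 rfl
  · linarith
end

section
/- Let a, b, τ be real numbers with a > b > 0 and τ > 0, and let λ > 0 be the unique positive solution of λ = a − b·e^{λτ}. Let V : ℝ → ℝ be nonnegative and continuous on [−τ, ∞), differentiable on (0, ∞), and suppose that for every t > 0, V′(t) ≤ −a·V(t) + b·sup_{s ∈ [t−τ, t]} V(s). Then V(t) ≤ ( sup_{s ∈ [−τ, 0]} V(s) )·e^{−λt} for all t ≥ 0. -/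
open Set

open Filter Topology in
theorem halanay_strict
    (a b τ : ℝ) (hab : b < a) (hb : 0 < b) (hτ : 0 < τ)
    (lam : ℝ) (hlam_pos : 0 < lam) (hlam : lam = a - b * Real.exp (lam * τ))
    (V V' : ℝ → ℝ)
    (hVcont : ContinuousOn V (Ici (-τ)))
    (hVderiv : ∀ t > (0 : ℝ), HasDerivAt V (V' t) t)
    (hineq : ∀ t > (0 : ℝ),
      V' t ≤ -a * V t + b * sSup (V '' Icc (t - τ) t))
    (K : ℝ) (hK0 : 0 < K) (hK : ∀ s ∈ Icc (-τ) 0, V s < K) :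
    ∀ t ≥ (0 : ℝ), V t < K * Real.exp (-lam * t) := by
  by_contra! hcon
  obtain ⟨t1, ht1, hVt1⟩ := hcon
  let g : ℝ → ℝ := fun t => V t - K * Real.exp (-lam * t)
  have hgc : ContinuousOn g (Ici 0) := by
    apply ContinuousOn.sub
    · exact hVcont.mono (Ici_subset_Ici.2 (by linarith))
    · fun_prop
  let S : Set ℝ := Ici 0 ∩ g ⁻¹' Ici 0
  have hSc : IsClosed S := hgc.preimage_isClosed_of_isClosed isClosed_Ici isClosed_Ici
  have hSne : S.Nonempty := ⟨t1, ht1, by simp only [g, mem_preimage, mem_Ici]; linarith⟩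
  have hSb : BddBelow S := ⟨0, fun x hx => hx.1⟩
  have hmem : sInf S ∈ S := hSc.csInf_mem hSne hSb
  have hlt : ∀ s, 0 ≤ s → s < sInf S → g s < 0 := by
    intro s hs hs'
    by_contra! h
    exact absurd (csInf_le hSb (show s ∈ S from ⟨hs, h⟩)) (not_le.2 hs')
  generalize sInf S = t0 at hmem hlt
  obtain ⟨h0, hg0⟩ := hmem
  simp only [mem_preimage, mem_Ici] at h0 hg0
  have ht0 : 0 < t0 := by
    rcases h0.eq_or_lt with h | h
    · subst h
      have := hK 0 ⟨by linarith, le_rfl⟩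
      simp [g] at hg0
      linarith
    · exact h
  have hE : HasDerivAt (fun t => K * Real.exp (-lam * t)) (K * (Real.exp (-lam * t0) * (-lam))) t0 := by
    have h1 : HasDerivAt (fun t : ℝ => -lam * t) (-lam) t0 := by
      simpa using (hasDerivAt_id t0).const_mul (-lam)
    exact h1.exp.const_mul K
  have hgd : HasDerivAt g (V' t0 - K * (Real.exp (-lam * t0) * (-lam))) t0 :=
    (hVderiv t0 ht0).sub hE
  have hev : ∀ᶠ s in 𝓝[<] t0, s ∈ Ioo 0 t0 := Ioo_mem_nhdsLT ht0
  have hg0' : g t0 ≤ 0 := by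
    have ht : Tendsto g (𝓝[<] t0) (𝓝 (g t0)) := hgd.continuousAt.tendsto.mono_left nhdsWithin_le_nhds
    refine le_of_tendsto ht ?_
    filter_upwards [hev] with s hs using (hlt s hs.1.le hs.2).le
  have hd : 0 ≤ V' t0 - K * (Real.exp (-lam * t0) * (-lam)) := by
    have ht := (hasDerivWithinAt_iff_tendsto_slope' (s := Iio t0) (by simp)).1 hgd.hasDerivWithinAt
    refine ge_of_tendsto ht ?_
    filter_upwards [hev] with s hs
    rw [slope_def_field]
    have := hlt s hs.1.le hs.2
    apply div_nonneg_of_nonpos <;> linarith [hs.2]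
  have hcomp : IsCompact (V '' Icc (t0 - τ) t0) :=
    isCompact_Icc.image_of_continuousOn (hVcont.mono fun x hx => by
      simp only [mem_Ici]; linarith [hx.1])
  have hne : (V '' Icc (t0 - τ) t0).Nonempty := ⟨V t0, t0, ⟨by linarith, le_rfl⟩, rfl⟩
  obtain ⟨s, hs, hVs⟩ := hcomp.sSup_mem hne
  have hsup : V s < K * Real.exp (-lam * (t0 - τ)) := by
    have hmono : K * Real.exp (-lam * s) ≤ K * Real.exp (-lam * (t0 - τ)) := by
      apply mul_le_mul_of_nonneg_left _ hK0.le
      apply Real.exp_le_exp.2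
      nlinarith [hs.1]
    rcases hs.2.eq_or_lt with h | h
    · subst h
      have : K * Real.exp (-lam * s) < K * Real.exp (-lam * (s - τ)) := by
        apply mul_lt_mul_of_pos_left _ hK0
        apply Real.exp_lt_exp.2
        nlinarith
      simp only [g] at hg0'
      linarith
    · rcases le_or_gt 0 s with h1 | h1
      · have := hlt s h1 h
        simp only [g] at this
        linarith
      · have h2 := hK s ⟨by linarith [hs.1], h1.le⟩
        have h3 : 1 ≤ Real.exp (-lam * s) := Real.one_le_exp (by nlinarith)
        nlinarith
  have hi := hineq t0 ht0
  rw [← hVs] at hi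
  have hexp : Real.exp (-lam * (t0 - τ)) = Real.exp (-lam * t0) * Real.exp (lam * τ) := by
    rw [← Real.exp_add]; ring_nf
  rw [hexp] at hsup
  have h4 : b * V s < b * (K * (Real.exp (-lam * t0) * Real.exp (lam * τ))) :=
    mul_lt_mul_of_pos_left hsup hb
  have h5 : a * (K * Real.exp (-lam * t0)) ≤ a * V t0 := by
    apply mul_le_mul_of_nonneg_left _ (by linarith)
    simp only [g] at hg0; linarith
  have h6 : K * (Real.exp (-lam * t0) * lam) =
      K * Real.exp (-lam * t0) * (a - b * Real.exp (lam * τ)) := by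
    rw [← hlam]; ring
  nlinarith

/-- Halanay-type inequality ([44, Lemma 3] as used in the paper). -/
theorem statement_7
    (a b τ : ℝ) (hab : b < a) (hb : 0 < b) (hτ : 0 < τ)
    (lam : ℝ) (hlam_pos : 0 < lam) (hlam : lam = a - b * Real.exp (lam * τ))
    (V V' : ℝ → ℝ)
    (hVnonneg : ∀ t ∈ Ici (-τ), 0 ≤ V t)
    (hVcont : ContinuousOn V (Ici (-τ)))
    (hVderiv : ∀ t > (0 : ℝ), HasDerivAt V (V' t) t)
    (hineq : ∀ t > (0 : ℝ),
      V' t ≤ -a * V t + b * sSup (V '' Icc (t - τ) t)) :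
    ∀ t ≥ (0 : ℝ), V t ≤ sSup (V '' Icc (-τ) 0) * Real.exp (-lam * t) := by
  intro t ht
  have hcomp : IsCompact (V '' Icc (-τ) 0) :=
    isCompact_Icc.image_of_continuousOn (hVcont.mono fun x hx => hx.1)
  have hle : ∀ s ∈ Icc (-τ) 0, V s ≤ sSup (V '' Icc (-τ) 0) := fun s hs =>
    le_csSup hcomp.bddAbove ⟨s, hs, rfl⟩
  have hM : 0 ≤ sSup (V '' Icc (-τ) 0) :=
    (hVnonneg 0 (by simp only [mem_Ici]; linarith)).trans (hle 0 ⟨by linarith, le_rfl⟩)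
  rw [← div_le_iff₀ (Real.exp_pos _)]
  refine le_of_forall_gt_imp_ge_of_dense fun K hK => ?_
  rw [div_le_iff₀ (Real.exp_pos _)]
  exact (halanay_strict a b τ hab hb hτ lam hlam_pos hlam V V' hVcont hVderiv hineq K
    (hM.trans_lt hK) (fun s hs => (hle s hs).trans_lt hK) t ht).le
end

section
/- Let s = √1785 and define u₊ : ℝ → ℝ by u₊(x) = [200(e^{−s} − 1)/(357(e^{s} − e^{−s}))]·e^{s x} − [200(e^{s} − 1)/(357(e^{s} − e^{−s}))]·e^{−s x} + 200/357. Then u₊(0) = 0, u₊(1) = 0, u₊″(x) = 1785·u₊(x) − 1000 for all x ∈ ℝ, and u₊ is a nontrivial solution of this boundary value problem, i.e. there exists x ∈ (0,1) with u₊(x) ≠ 0. -/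
/-- The explicit nontrivial stationary solution (3.35) of the boundary value
problem (3.34): u″ = 1785 u − 1000 on (0,1), u(0) = u(1) = 0. -/
theorem statement_8
    (s : ℝ) (hs : s = Real.sqrt 1785)
    (u : ℝ → ℝ)
    (hu : ∀ x : ℝ, u x =
      (200 * (Real.exp (-s) - 1) / (357 * (Real.exp s - Real.exp (-s)))) * Real.exp (s * x)
      - (200 * (Real.exp s - 1) / (357 * (Real.exp s - Real.exp (-s)))) * Real.exp (-s * x)
      + 200 / 357) :
    u 0 = 0 ∧ u 1 = 0 ∧ (∀ x : ℝ, deriv (deriv u) x = 1785 * u x - 1000) ∧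
      ∃ x ∈ Set.Ioo (0 : ℝ) 1, u x ≠ 0 := by
  have hs2 : s * s = 1785 := by rw [hs]; exact Real.mul_self_sqrt (by norm_num)
  have hspos : 0 < s := by rw [hs]; exact Real.sqrt_pos.mpr (by norm_num)
  have hd : Real.exp s - Real.exp (-s) ≠ 0 := by
    have : Real.exp (-s) < Real.exp s := Real.exp_lt_exp.mpr (by linarith)
    exact (sub_pos.mpr this).ne'
  have hm : Real.exp s * Real.exp (-s) = 1 := by rw [← Real.exp_add]; simp
  have h2 : ∀ x : ℝ, deriv (deriv u) x = 1785 * u x - 1000 := by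
    have key : ∀ A B c : ℝ, ∀ x : ℝ, HasDerivAt
        (fun x => A * Real.exp (s * x) - B * Real.exp (-s * x) + c)
        (A * s * Real.exp (s * x) - (-(B * s)) * Real.exp (-s * x) + 0) x := by
      intro A B c x
      have e1 := (((hasDerivAt_id' x).const_mul s).exp).const_mul A
      have e2 := (((hasDerivAt_id' x).const_mul (-s)).exp).const_mul B
      have e3 := (e1.sub e2).add_const c
      exact e3.congr_deriv (by ring)
    intro x
    rw [hu x, funext hu]
    generalize 200 * (Real.exp (-s) - 1) / (357 * (Real.exp s - Real.exp (-s))) = A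
    generalize 200 * (Real.exp s - 1) / (357 * (Real.exp s - Real.exp (-s))) = B
    have hf : deriv (fun x => A * Real.exp (s * x) - B * Real.exp (-s * x) + 200 / 357) =
        fun x => A * s * Real.exp (s * x) - (-(B * s)) * Real.exp (-s * x) + 0 :=
      funext fun y => (key A B (200 / 357) y).deriv
    rw [hf, (key _ _ _ x).deriv]
    linear_combination (A * Real.exp (s * x) - B * Real.exp (-s * x)) * hs2
  refine ⟨?_, ?_, h2, ?_⟩
  · rw [hu]
    simp only [mul_zero, Real.exp_zero]
    field_simp
    ring
  · rw [hu]
    simp only [mul_one]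
    field_simp
    linear_combination 0 * hm
  · by_contra! h
    have hev : u =ᶠ[nhds (1/2 : ℝ)] fun _ => 0 := by
      filter_upwards [Ioo_mem_nhds (show (0:ℝ) < 1/2 by norm_num) (show (1/2:ℝ) < 1 by norm_num)]
        with x hx using h x hx
    have h3 := hev.deriv.deriv_eq
    rw [h2, hev.eq_of_nhds] at h3
    simp at h3
end

section
/- Let k > 0, let F : ℝ → ℝ be defined by F(u) = (9k/4)|u|^{4/3} + 2k·u + k/4 for u ≤ −1, F(u) = (k/2)u² for −1 ≤ u ≤ 1, and F(u) = (9k/4)u^{4/3} − 2k·u + k/4 for u ≥ 1. Then F(u) ≤ (k/2)·u² for every u ∈ ℝ, with equality F(u) = (k/2)·u² whenever |u| ≤ 1. -/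
theorem key_aux (u : ℝ) (hu : 1 ≤ u) :
    (9 / 4) * u ^ ((4 : ℝ) / 3) - 2 * u + 1 / 4 ≤ u ^ 2 / 2 := by
  have h0 : 0 ≤ u := by linarith
  obtain ⟨t, ht⟩ : ∃ t : ℝ, t = u ^ ((1 : ℝ) / 3) := ⟨_, rfl⟩
  have ht1 : 1 ≤ t := by
    rw [ht]; exact Real.one_le_rpow hu (by norm_num)
  have h3 : t ^ 3 = u := by
    rw [ht, ← Real.rpow_natCast, ← Real.rpow_mul h0]; norm_num
  have h4 : u ^ ((4 : ℝ) / 3) = t ^ 4 := by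
    rw [ht, ← Real.rpow_natCast, ← Real.rpow_mul h0]; norm_num
  rw [h4, ← h3]
  have hs : 0 ≤ t - 1 := by linarith
  have : 0 ≤ (t - 1) ^ 3 * (2 * t ^ 3 + 6 * t ^ 2 + 3 * t + 1) := by positivity
  nlinarith [this]

/-- Pointwise comparison F(u) ≤ (k/2)u², with equality for |u| ≤ 1,
used in the proof of Statement 2 of the paper. -/
theorem statement_14
    (k : ℝ) (hk : 0 < k) (F : ℝ → ℝ)
    (hF₁ : ∀ u : ℝ, u ≤ -1 → F u = (9 * k / 4) * |u| ^ ((4 : ℝ) / 3) + 2 * k * u + k / 4)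
    (hF₂ : ∀ u : ℝ, -1 ≤ u → u ≤ 1 → F u = (k / 2) * u ^ 2)
    (hF₃ : ∀ u : ℝ, 1 ≤ u → F u = (9 * k / 4) * u ^ ((4 : ℝ) / 3) - 2 * k * u + k / 4) :
    (∀ u : ℝ, F u ≤ (k / 2) * u ^ 2) ∧ ∀ u : ℝ, |u| ≤ 1 → F u = (k / 2) * u ^ 2 := by
  refine ⟨fun u => ?_, fun u hu => hF₂ u (abs_le.1 hu).1 (abs_le.1 hu).2⟩
  rcases le_total u (-1) with h | h
  · rw [hF₁ u h, abs_of_nonpos (by linarith)]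
    have := mul_le_mul_of_nonneg_left (key_aux (-u) (by linarith)) hk.le
    linarith
  · rcases le_total u 1 with h' | h'
    · exact (hF₂ u h h').le
    · rw [hF₃ u h']
      have := mul_le_mul_of_nonneg_left (key_aux u h') hk.le
      linarith
end

section
/- Let n ≥ 1, let l₁, …, lₙ > 0, and let Ω = { x ∈ ℝⁿ : |xᵢ| < lᵢ for all i } be the open cube. Let μ : ℝⁿ → ℝ be continuously differentiable and vanish on the boundary of Ω, i.e. μ(x) = 0 for all x ∈ ∂Ω. Then for each index i, ∫_Ω μ(x)² dx ≤ lᵢ² · ∫_Ω (∂μ/∂xᵢ)(x)² dx. -/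
open MeasureTheory

/-- The Poincaré-type inequality of Remark 15 of the paper: for a C¹ function
vanishing on the boundary of the cube Ω = {x : |xᵢ| < lᵢ},
∫_Ω μ² ≤ lᵢ² ∫_Ω (∂μ/∂xᵢ)². -/
theorem statement_18
    (n : ℕ) (hn : 1 ≤ n) (l : Fin n → ℝ) (hl : ∀ i, 0 < l i)
    (Ω : Set (Fin n → ℝ)) (hΩ : Ω = {x : Fin n → ℝ | ∀ i, |x i| < l i})
    (μ : (Fin n → ℝ) → ℝ) (hμ : ContDiff ℝ 1 μ)
    (hbound : ∀ x ∈ frontier Ω, μ x = 0) (i : Fin n) :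
    ∫ x in Ω, (μ x) ^ 2 ≤ (l i) ^ 2 * ∫ x in Ω, (fderiv ℝ μ x (Pi.single i 1)) ^ 2 := by
  obtain ⟨m, rfl⟩ : ∃ m, n = m + 1 := ⟨n - 1, by omega⟩
  have hli := hl i
  have hΩ' : Ω = Set.pi Set.univ fun j => Set.Ioo (-l j) (l j) := by
    rw [hΩ]; ext x; simp [abs_lt, Set.mem_pi]
  have hclos : closure Ω = Set.Icc (-l) l := by
    rw [hΩ', closure_pi_set, ← Set.pi_univ_Icc]
    congr 1; ext1 j
    rw [closure_Ioo (by have := hl j; intro h; linarith)]; rfl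
  have hopen : IsOpen Ω := by
    rw [hΩ']; exact isOpen_set_pi Set.finite_univ fun _ _ => isOpen_Ioo
  have hae : Ω =ᵐ[volume] Set.Icc (-l) l := by
    rw [hΩ']; exact Measure.univ_pi_Ioo_ae_eq_Icc
  have hzero : ∀ x ∈ Set.Icc (-l) l, (x i = l i ∨ x i = - l i) → μ x = 0 := by
    intro x hx h
    apply hbound
    rw [hopen.frontier_eq, hclos]
    refine ⟨hx, fun hx' => ?_⟩
    rw [hΩ] at hx'
    have := abs_lt.1 (hx' i)
    rcases h with h | h <;> linarith [this.1, this.2]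
  have hle : -l ≤ l := fun j => by have := hl j; simp only [Pi.neg_apply]; linarith
  have hrange : ∀ x ∈ Set.Icc (-l) l, x i / l i ∈ Set.Ioo (-(Real.pi / 2)) (Real.pi / 2) := by
    intro x hx
    have h1 : - l i ≤ x i := hx.1 i
    have h2 : x i ≤ l i := hx.2 i
    have h3 : -1 ≤ x i / l i := by rw [le_div_iff₀ hli]; linarith
    have h4 : x i / l i ≤ 1 := by rw [div_le_iff₀ hli]; linarith
    have := Real.pi_gt_three
    constructor <;> linarith
  set t : (Fin (m + 1) → ℝ) → ℝ := fun x => Real.tan (x i / l i) with ht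
  have htc : ContinuousOn t (Set.Icc (-l) l) := by
    refine Real.continuousOn_tan_Ioo.comp (f := fun x : Fin (m + 1) → ℝ => x i / l i) ?_ hrange
    fun_prop
  have hμc := hμ.continuous
  have hdc : Continuous fun x => fderiv ℝ μ x (Pi.single i 1) :=
    (hμ.continuous_fderiv (by norm_num)).clm_apply continuous_const
  set d : (Fin (m + 1) → ℝ) → ℝ := fun x => fderiv ℝ μ x (Pi.single i 1) with hd
  let G : (Fin (m + 1) → ℝ) → (Fin (m + 1) → ℝ) →L[ℝ] ℝ := fun x =>
    (l i * t x) • ((2 * μ x) • fderiv ℝ μ x) +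
      (μ x ^ 2) • ((1 + t x ^ 2) • ContinuousLinearMap.proj (R := ℝ) (φ := fun _ => ℝ) i)
  have hG : ∀ x ∈ Set.Icc (-l) l, HasFDerivAt (fun x => (l i * t x) * μ x ^ 2) (G x) x := by
    intro x hx
    have h1 : HasDerivAt Real.tan (1 + t x ^ 2) (x i / l i) := by
      convert Real.hasDerivAt_tan_of_mem_Ioo (hrange x hx) using 1
      have hc := (Real.cos_pos_of_mem_Ioo (hrange x hx)).ne'
      simp only [ht, Real.tan_eq_sin_div_cos]
      field_simp
      linarith [Real.sin_sq_add_cos_sq (x i / l i)]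
    have h2 : HasFDerivAt (fun x : Fin (m + 1) → ℝ => x i / l i)
        ((l i)⁻¹ • ContinuousLinearMap.proj (R := ℝ) (φ := fun _ => ℝ) i) x := by
      simpa [div_eq_mul_inv] using (hasFDerivAt_apply (𝕜 := ℝ) i x).mul_const (l i)⁻¹
    have h3 : HasFDerivAt t ((1 + t x ^ 2) • (l i)⁻¹ • ContinuousLinearMap.proj (R := ℝ) (φ := fun _ => ℝ) i) x :=
      HasDerivAt.comp_hasFDerivAt (h₂ := Real.tan) x h1 h2
    have h4 : HasFDerivAt μ (fderiv ℝ μ x) x := (hμ.differentiable (by norm_num) x).hasFDerivAt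
    have h5 := (h3.const_mul (l i)).mul (h4.pow 2)
    refine h5.congr_fderiv ?_
    ext v
    simp [G]
    field_simp
    simp
  have hGe : ∀ x, G x (Pi.single i 1) = 2 * l i * t x * μ x * d x + μ x ^ 2 * (1 + t x ^ 2) := by
    intro x; simp [G, hd]; ring
  have hGc : ContinuousOn (fun x => G x (Pi.single i 1)) (Set.Icc (-l) l) := by
    simp only [hGe]
    fun_prop
  have hdiv := integral_divergence_of_hasFDerivAt_off_countable' (-l) l hle
    (fun j x => if j = i then (l i * t x) * μ x ^ 2 else 0)
    (fun j x => if j = i then G x else 0) ∅ Set.countable_empty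
    (by
      intro j
      by_cases h : j = i
      · simp only [h, if_true]; fun_prop
      · simp only [h, if_false]; fun_prop)
    (by
      rintro x ⟨hx, -⟩ j
      have hx' : x ∈ Set.Icc (-l) l := by
        rw [← hclos, hΩ']; exact subset_closure hx
      by_cases h : j = i
      · simp only [h, if_true]; exact hG x hx'
      · simp only [h, if_false]; exact hasFDerivAt_const _ _)
    (by
      have : (fun x => ∑ j, (if j = i then G x else 0) (Pi.single j 1))
          = fun x => G x (Pi.single i 1) := by
        ext x
        rw [Finset.sum_eq_single i] <;> simp +contextual
      rw [this]
      exact hGc.integrableOn_compact isCompact_Icc)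
  have hsum : ∀ x, ∑ j, (if j = i then G x else 0) (Pi.single j 1) = G x (Pi.single i 1) := by
    intro x
    rw [Finset.sum_eq_single i] <;> simp +contextual
  simp only [hsum] at hdiv
  have hface : ∀ c : ℝ, (c = l i ∨ c = - l i) →
      ∀ y ∈ Set.Icc ((-l) ∘ i.succAbove) (l ∘ i.succAbove), μ (i.insertNth c y) = 0 := by
    intro c hc y hy
    apply hzero
    · rw [Fin.insertNth_mem_Icc]
      refine ⟨?_, hy⟩
      rcases hc with rfl | rfl <;> constructor <;> (try simp only [Pi.neg_apply]) <;> linarith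
    · simpa using hc
  have hdiv0 : ∫ x in Set.Icc (-l) l, G x (Pi.single i 1) = 0 := by
    rw [hdiv]
    apply Finset.sum_eq_zero
    intro j _
    by_cases h : j = i
    · subst h
      rw [setIntegral_eq_zero_of_forall_eq_zero, setIntegral_eq_zero_of_forall_eq_zero, sub_zero]
      · intro y hy
        simp [hface _ (Or.inr rfl) y hy]
      · intro y hy
        simp [hface _ (Or.inl rfl) y hy]
    · simp [h]
  rw [setIntegral_congr_set hae, setIntegral_congr_set hae]
  have i1 : IntegrableOn (fun x => μ x ^ 2) (Set.Icc (-l) l) :=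
    (hμc.pow 2).continuousOn.integrableOn_compact isCompact_Icc
  have i2 : IntegrableOn (fun x => l i ^ 2 * d x ^ 2) (Set.Icc (-l) l) :=
    (continuous_const.mul (hdc.pow 2)).continuousOn.integrableOn_compact isCompact_Icc
  have i3 : IntegrableOn (fun x => G x (Pi.single i 1)) (Set.Icc (-l) l) :=
    hGc.integrableOn_compact isCompact_Icc
  calc ∫ x in Set.Icc (-l) l, μ x ^ 2
      ≤ ∫ x in Set.Icc (-l) l, (l i ^ 2 * d x ^ 2 + G x (Pi.single i 1)) := by
        refine integral_mono i1 (i2.add i3) fun x => ?_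
        simp only [hGe]
        nlinarith [sq_nonneg (l i * d x + t x * μ x)]
    _ = l i ^ 2 * ∫ x in Set.Icc (-l) l, d x ^ 2 := by
        rw [integral_add i2 i3, hdiv0, add_zero, integral_const_mul]
end

section
/- Let τ̄ > 0, let d : ℝ → ℝ be a delay function with 0 ≤ d(t) ≤ τ̄ for all t, and let λ > 0 be the unique positive solution of λ = 3.575 − 0.005·e^{λτ̄}. Let y : ℝ → ℝ be continuous on [−τ̄, ∞) and bounded on [−τ̄, 0], differentiable on (0, ∞), and satisfy for all t > 0 the delay differential equation y′(t) = −1.79·y(t) + 0.005·y(t − d(t)). Then y(t)² ≤ ( sup_{s ∈ [−τ̄, 0]} y(s)² )·e^{−λ t} for all t ≥ 0; in particular y(t) → 0 exponentially with rate λ/2. -/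
open Set

/-- Global exponential stability from the proof of Statement 1 of the paper:
for y′(t) = −1.79 y(t) + 0.005 y(t − d(t)) with bounded delay, one has
y(t)² ≤ (sup_{[−τ̄,0]} y²) e^{−λt}, where λ > 0 solves λ = 3.575 − 0.005 e^{λτ̄}. -/
theorem statement_19
    (τ' : ℝ) (hτ' : 0 < τ')
    (d : ℝ → ℝ) (hd : ∀ t : ℝ, 0 ≤ d t ∧ d t ≤ τ')
    (lam : ℝ) (hlam_pos : 0 < lam)
    (hlam : lam = 3.575 - 0.005 * Real.exp (lam * τ'))
    (y : ℝ → ℝ)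
    (hycont : ContinuousOn y (Ici (-τ')))
    (hybdd : ∃ M : ℝ, ∀ s ∈ Icc (-τ') 0, |y s| ≤ M)
    (hyderiv : ∀ t > (0 : ℝ),
      HasDerivAt y (-1.79 * y t + 0.005 * y (t - d t)) t) :
    ∀ t ≥ (0 : ℝ),
      (y t) ^ 2 ≤ sSup ((fun s => (y s) ^ 2) '' Icc (-τ') 0) * Real.exp (-lam * t) := by
  set M := sSup ((fun s => (y s) ^ 2) '' Icc (-τ') 0) with hM
  have hMle : ∀ s ∈ Icc (-τ') 0, (y s) ^ 2 ≤ M := by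
    intro s hs
    apply le_csSup
    · obtain ⟨K, hK⟩ := hybdd
      refine ⟨K ^ 2, ?_⟩
      rintro _ ⟨u, hu, rfl⟩
      exact sq_le_sq' (by linarith [(abs_le.mp (hK u hu)).1]) (abs_le.mp (hK u hu)).2
    · exact ⟨s, hs, rfl⟩
  set W : ℝ → ℝ := fun t => (y t) ^ 2 * Real.exp (lam * t) with hW
  have hWneg : ∀ s ∈ Icc (-τ') 0, W s ≤ M := by
    intro s hs
    have h1 : Real.exp (lam * s) ≤ 1 :=
      Real.exp_le_one_iff.mpr (by nlinarith [hs.2])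
    have h2 := hMle s hs
    have h3 := sq_nonneg (y s)
    simp only [hW]
    nlinarith
  have hWcont : ContinuousOn W (Ici (-τ')) := by
    apply ContinuousOn.mul (hycont.pow 2)
    exact Continuous.continuousOn (by fun_prop)
  have key : ∀ ε > 0, ∀ T ≥ 0, W T < M + ε * (1 + T) := by
    intro ε hε T hT
    by_contra! hcon
    set g : ℝ → ℝ := fun t => W t - (M + ε * (1 + t)) with hg
    have hgcont : ContinuousOn g (Icc 0 T) := by
      apply ContinuousOn.sub
      · exact hWcont.mono (fun x hx => by simp only [mem_Ici]; linarith [hx.1])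
      · exact Continuous.continuousOn (by fun_prop)
    have hclosed : IsClosed (Icc 0 T ∩ g ⁻¹' Ici 0) :=
      hgcont.preimage_isClosed_of_isClosed isClosed_Icc isClosed_Ici
    have hcomp : IsCompact (Icc 0 T ∩ g ⁻¹' Ici 0) :=
      isCompact_Icc.of_isClosed_subset hclosed inter_subset_left
    obtain ⟨t, ⟨⟨ht, htT⟩, hgt⟩, hmin⟩ := hcomp.exists_isLeast
      ⟨T, ⟨hT, le_rfl⟩, by simp only [hg, mem_preimage, mem_Ici]; linarith⟩
    have hgt' : M + ε * (1 + t) ≤ W t := by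
      simp only [hg, mem_preimage, mem_Ici] at hgt; linarith
    have hbefore : ∀ s, 0 ≤ s → s < t → W s < M + ε * (1 + s) := by
      intro s hs hst
      by_contra! h
      have : t ≤ s := hmin ⟨⟨hs, by linarith⟩, by
        simp only [hg, mem_preimage, mem_Ici]; linarith⟩
      linarith
    have htpos : 0 < t := by
      rcases ht.lt_or_eq with h | h
      · exact h
      · have := hWneg 0 ⟨by linarith, le_rfl⟩
        rw [← h] at hgt'
        nlinarith
    obtain ⟨hd0, hd1⟩ := hd t
    have hdelay : W (t - d t) ≤ W t := by
      rcases hd0.lt_or_eq with h | h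
      · rcases le_or_gt 0 (t - d t) with h0 | h0
        · have := hbefore _ h0 (by linarith)
          nlinarith
        · have := hWneg (t - d t) ⟨by linarith, h0.le⟩
          nlinarith
      · rw [← h, sub_zero]
    have hexp : HasDerivAt (fun t => Real.exp (lam * t)) (Real.exp (lam * t) * lam) t := by
      simpa using ((hasDerivAt_id t).const_mul lam).exp
    have hWd := ((hyderiv t htpos).pow 2).mul hexp
    have hlin : HasDerivAt (fun t => M + ε * (1 + t)) ε t := by
      simpa using (((hasDerivAt_id t).const_add 1).const_mul ε).const_add M
    have hgd := hWd.sub hlin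
    have hnonneg := ge_of_tendsto (b := (0:ℝ)) (hgd.tendsto_slope.mono_left
      (nhdsWithin_mono t (fun x (hx : x ∈ Iio t) => ne_of_lt hx))) (by
        filter_upwards [Ioo_mem_nhdsLT htpos] with s hs
        have h1 := hbefore s hs.1.le hs.2
        simp only [hW] at h1 hgt'
        rw [slope_def_field]
        apply div_nonneg_of_nonpos
        · simp only [Pi.sub_apply, Pi.mul_apply, Pi.pow_apply]
          linarith
        · linarith [hs.2])
    set E := Real.exp (lam * t) with hE
    have hEpos : 0 < E := Real.exp_pos _
    set z := y (t - d t) with hz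
    have hle : z ^ 2 * E ≤ Real.exp (lam * τ') * W t := by
      have h1 : E = Real.exp (lam * d t) * Real.exp (lam * (t - d t)) := by
        rw [hE, ← Real.exp_add]; congr 1; ring
      have h2 : z ^ 2 * E = Real.exp (lam * d t) * W (t - d t) := by
        rw [h1]; simp only [hW]; ring
      rw [h2]
      have h3 : 0 ≤ W (t - d t) := by simp only [hW]; positivity
      exact mul_le_mul (Real.exp_le_exp.mpr (by nlinarith)) hdelay h3 (Real.exp_pos _).le
    have hWt : W t = y t ^ 2 * E := rfl
    have hyz : 0 ≤ (y t - z) ^ 2 * E := by positivity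
    have hX : Real.exp (lam * τ') = (3.575 - lam) / 0.005 := by
      rw [eq_div_iff (by norm_num)]; linarith
    rw [hX, hWt] at hle
    norm_num at hnonneg hle
    ring_nf at hnonneg hle hyz
    linarith
  intro t ht
  have hWM : W t ≤ M := by
    by_contra! h
    have := key ((W t - M) / (1 + t)) (div_pos (by linarith) (by linarith)) t ht
    rw [div_mul_cancel₀ _ (by linarith)] at this
    linarith
  have h1 : y t ^ 2 = W t * Real.exp (-lam * t) := by
    simp only [hW]
    rw [mul_assoc, ← Real.exp_add]
    simp
  rw [h1]
  exact mul_le_mul_of_nonneg_right hWM (Real.exp_pos _).le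
end
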